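/- arXiv:2505.05651 — 2 statements merged into one kernel-verified Lean document; each statement's English description precedes it below -/
import Mathlib

section
/- Let s_k denote the number of simple permutations in A_k and a_k = |A_k|. For n ≥ 2, a_n = ∑_{i=2}^{n} s_i · a_{n−i+1}, with a_1 = 1. -/
/-- Occurrence of the vincular pattern ⟨32⟩⟨41⟩: two disjoint adjacent pairs, in this
order, order-isomorphic to 3241. -/
def P3241 {n : ℕ} (π : Equiv.Perm (Fin n)) : Prop :=
  ∃ i i' j j' : Fin n, (i' : ℕ) = (i : ℕ) + 1 ∧ (j' : ℕ) = (j : ℕ) + 1 ∧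
    (i' : ℕ) < (j : ℕ) ∧ π j' < π i' ∧ π i' < π i ∧ π i < π j

/-- Occurrence of the vincular pattern ⟨14⟩⟨23⟩. -/
def P1423 {n : ℕ} (π : Equiv.Perm (Fin n)) : Prop :=
  ∃ i i' j j' : Fin n, (i' : ℕ) = (i : ℕ) + 1 ∧ (j' : ℕ) = (j : ℕ) + 1 ∧
    (i' : ℕ) < (j : ℕ) ∧ π i < π j ∧ π j < π j' ∧ π j' < π i'

/-- Occurrence of the vincular pattern ⟨41⟩⟨32⟩. -/
def P4132 {n : ℕ} (π : Equiv.Perm (Fin n)) : Prop :=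
  ∃ i i' j j' : Fin n, (i' : ℕ) = (i : ℕ) + 1 ∧ (j' : ℕ) = (j : ℕ) + 1 ∧
    (i' : ℕ) < (j : ℕ) ∧ π i' < π j' ∧ π j' < π j ∧ π j < π i

/-- Occurrence of the vincular pattern ⟨23⟩⟨14⟩. -/
def P2314 {n : ℕ} (π : Equiv.Perm (Fin n)) : Prop :=
  ∃ i i' j j' : Fin n, (i' : ℕ) = (i : ℕ) + 1 ∧ (j' : ℕ) = (j : ℕ) + 1 ∧
    (i' : ℕ) < (j : ℕ) ∧ π j < π i ∧ π i < π i' ∧ π i' < π j'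

/-- Occurrence of the vincular pattern ⟨23⟩⟨1⟩ where the `1` must be the final
entry of `π`. -/
def P231final {n : ℕ} (π : Equiv.Perm (Fin n)) : Prop :=
  ∃ i i' l : Fin n, (i' : ℕ) = (i : ℕ) + 1 ∧ (l : ℕ) = n - 1 ∧
    (i' : ℕ) < (l : ℕ) ∧ π l < π i ∧ π i < π i'

/-- Occurrence of the vincular pattern ⟨1⟩⟨32⟩ where the `1` must be the first
entry of `π`. -/
def P132initial {n : ℕ} (π : Equiv.Perm (Fin n)) : Prop :=
  ∃ f j j' : Fin n, (f : ℕ) = 0 ∧ (j' : ℕ) = (j : ℕ) + 1 ∧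
    0 < (j : ℕ) ∧ π f < π j' ∧ π j' < π j

/-- `π` avoids all six vincular patterns
⟨32⟩⟨41⟩, ⟨14⟩⟨23⟩, ⟨41⟩⟨32⟩, ⟨23⟩⟨14⟩, ⟨23⟩⟨1 final⟩, ⟨1 initial⟩⟨32⟩. -/
def MemA {n : ℕ} (π : Equiv.Perm (Fin n)) : Prop :=
  ¬ P3241 π ∧ ¬ P1423 π ∧ ¬ P4132 π ∧ ¬ P2314 π ∧ ¬ P231final π ∧ ¬ P132initial π

/-- The positions `i ≤ x ≤ j` form a block (interval) of `π`: the values on those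
positions form an interval of values of the same length. -/
def IsPermBlock {k : ℕ} (π : Equiv.Perm (Fin k)) (i j : Fin k) : Prop :=
  ∃ v : ℕ, ∀ x : Fin k, i ≤ x → x ≤ j →
    v ≤ (π x : ℕ) ∧ (π x : ℕ) ≤ v + ((j : ℕ) - (i : ℕ))

/-- `π` is simple: its only blocks are the singletons and the whole interval. -/
def IsSimplePerm {k : ℕ} (π : Equiv.Perm (Fin k)) : Prop :=
  ∀ i j : Fin k, i ≤ j → IsPermBlock π i j →
    (i = j ∨ ((i : ℕ) = 0 ∧ (j : ℕ) = k - 1))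

/-- `a k = |A_k|`. -/
noncomputable def aCard (k : ℕ) : ℕ := Nat.card {π : Equiv.Perm (Fin k) // MemA π}

/-- `s k`: the number of simple permutations in `A_k`. -/
noncomputable def sCard (k : ℕ) : ℕ :=
  Nat.card {π : Equiv.Perm (Fin k) // MemA π ∧ IsSimplePerm π}


namespace AR

/-- `f` restricts to a permutation of `{0,…,n-1}`. -/
def PermN (n : ℕ) (f : ℕ → ℕ) : Prop :=
  (∀ x, x < n → f x < n) ∧ ∀ x y, x < n → y < n → f x = f y → x = y

/-- Pattern avoidance on natural-number functions. -/
structure MA (n : ℕ) (f : ℕ → ℕ) : Prop where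
  h1 : ∀ i j, i + 1 < j → j + 1 < n → f (j+1) < f (i+1) → f (i+1) < f i → f i < f j → False
  h2 : ∀ i j, i + 1 < j → j + 1 < n → f i < f j → f j < f (j+1) → f (j+1) < f (i+1) → False
  h3 : ∀ i j, i + 1 < j → j + 1 < n → f (i+1) < f (j+1) → f (j+1) < f j → f j < f i → False
  h4 : ∀ i j, i + 1 < j → j + 1 < n → f j < f i → f i < f (i+1) → f (i+1) < f (j+1) → False
  h5 : ∀ i, i + 1 < n - 1 → f (n-1) < f i → f i < f (i+1) → False
  h6 : ∀ j, 0 < j → j + 1 < n → f 0 < f (j+1) → f (j+1) < f j → False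

/-- Simplicity on natural-number functions. -/
def SN (n : ℕ) (f : ℕ → ℕ) : Prop :=
  ∀ i j v, i ≤ j → j < n → (∀ x, i ≤ x → x ≤ j → v ≤ f x ∧ f x ≤ v + (j - i)) →
    i = j ∨ (i = 0 ∧ j = n - 1)

/-- No nontrivial block at the bottom. -/
def ZN (n : ℕ) (f : ℕ → ℕ) : Prop :=
  ∀ i j, i < j → j < n → (∀ x, i ≤ x → x ≤ j → f x ≤ j - i) → i = 0 ∧ j = n - 1

/-- Reversal. -/
def rev (n : ℕ) (f : ℕ → ℕ) : ℕ → ℕ := fun x => f (n - 1 - x)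

theorem pigeon {n f} (hf : PermN n f) {i j v : ℕ} (hij : i ≤ j) (hj : j < n)
    (hb : ∀ x, i ≤ x → x ≤ j → v ≤ f x ∧ f x ≤ v + (j - i)) :
    ∀ x, x < n → v ≤ f x → f x ≤ v + (j - i) → i ≤ x ∧ x ≤ j := by
  intro x hx h1 h2
  have him : (Finset.Icc i j).image f = Finset.Icc v (v + (j - i)) := by
    apply Finset.eq_of_subset_of_card_le
    · intro y hy
      simp only [Finset.mem_image, Finset.mem_Icc] at hy ⊢
      obtain ⟨a, ha, rfl⟩ := hy
      exact hb a ha.1 ha.2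
    · rw [Finset.card_image_of_injOn]
      · simp only [Nat.card_Icc]; omega
      · intro a ha b hb' hab
        simp only [Finset.coe_Icc, Set.mem_Icc] at ha hb'
        exact hf.2 a b (by omega) (by omega) hab
  have : f x ∈ (Finset.Icc i j).image f := by rw [him]; simp; omega
  simp only [Finset.mem_image, Finset.mem_Icc] at this
  obtain ⟨a, ha, hax⟩ := this
  have := hf.2 a x (by omega) hx hax
  omega

theorem PermN.surj {n f} (hf : PermN n f) (y : ℕ) (hy : y < n) : ∃ x, x < n ∧ f x = y := by
  by_contra hcon
  push Not at hcon
  have : (Finset.range n).image f ⊆ (Finset.range n).erase y := by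
    intro z hz
    simp only [Finset.mem_image, Finset.mem_range, Finset.mem_erase] at hz ⊢
    obtain ⟨a, ha, rfl⟩ := hz
    exact ⟨hcon a ha, hf.1 a ha⟩
  have h := Finset.card_le_card this
  rw [Finset.card_image_of_injOn, Finset.card_erase_of_mem (by simpa using hy)] at h
  · simp at h; omega
  · intro a ha b hb hab
    simp at ha hb
    exact hf.2 a b ha hb hab

theorem PermN.rev {n f} (hf : PermN n f) : PermN n (rev n f) := by
  refine ⟨fun x hx => hf.1 _ (by omega), fun x y hx hy h => ?_⟩
  have := hf.2 _ _ (by omega) (by omega) h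
  omega

theorem MA.rev {n f} (h : MA n f) : MA n (rev n f) := by
  have e : ∀ x, x + 1 < n → n - 1 - x = n - 1 - (x + 1) + 1 := by intros; omega
  constructor
  · intro i j hij hj a b c
    simp only [AR.rev, e i (by omega), e j hj] at a b c
    exact h.h2 _ _ (by omega) (by omega) a b c
  · intro i j hij hj a b c
    simp only [AR.rev, e i (by omega), e j hj] at a b c
    exact h.h1 _ _ (by omega) (by omega) a b c
  · intro i j hij hj a b c
    simp only [AR.rev, e i (by omega), e j hj] at a b c
    exact h.h4 _ _ (by omega) (by omega) a b c
  · intro i j hij hj a b c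
    simp only [AR.rev, e i (by omega), e j hj] at a b c
    exact h.h3 _ _ (by omega) (by omega) a b c
  · intro i hi a b
    simp only [AR.rev, e i (by omega), Nat.sub_self] at a b
    exact h.h6 _ (by omega) (by omega) a b
  · intro j hj0 hj a b
    simp only [AR.rev, e j hj, Nat.sub_zero] at a b
    exact h.h5 _ (by omega) a b

theorem block_rev {n : ℕ} {f : ℕ → ℕ} {i j v w : ℕ} (hij : i ≤ j) (hj : j < n)
    (hb : ∀ x, i ≤ x → x ≤ j → v ≤ f x ∧ f x ≤ v + w) :
    ∀ x, n - 1 - j ≤ x → x ≤ n - 1 - i → v ≤ rev n f x ∧ rev n f x ≤ v + w := by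
  intro x h1 h2
  exact hb _ (by omega) (by omega)

theorem ZN.rev {n f} (h : ZN n f) : ZN n (rev n f) := by
  intro i j hij hj hb
  have := h (n-1-j) (n-1-i) (by omega) (by omega) (by
    intro x h1 h2
    have := hb (n-1-x) (by omega) (by omega)
    simp only [AR.rev] at this
    rw [show n - 1 - (n-1-x) = x by omega] at this
    omega)
  omega

/-- If a nontrivial block is entirely to the left of the value `0`, there is a nontrivial bottom block. -/
theorem key_right {n f} (hf : PermN n f) (hA : MA n f) (hZ : ZN n f) {i j v p : ℕ}
    (hij : i < j) (hp : p < n) (hjp : j < p) (hp0 : f p = 0)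
    (hb : ∀ x, i ≤ x → x ≤ j → v ≤ f x ∧ f x ≤ v + (j - i)) : False := by
  have hout := pigeon hf hij.le (by omega) hb
  have hv : 0 < v := by
    by_contra h
    have := hout p hp (by omega) (by omega)
    omega
  -- crossing dichotomy
  have hdich : ∀ x, x < n → (x < i ∨ j < x) → f x < v ∨ v + (j - i) < f x := by
    intro x hx h
    by_contra hc
    have := hout x hx (by omega) (by omega)
    omega
  -- the block is decreasing
  have hdec : ∀ x, i ≤ x → x < j → f (x+1) < f x := by
    intro x h1 h2
    by_contra hc
    have hne : f x ≠ f (x+1) := fun h => by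
      have := hf.2 _ _ (by omega) (by omega) h
      omega
    have hx := hb x h1 (by omega)
    have hx1 := hb (x+1) (by omega) (by omega)
    have hlow : ∀ t, p + t < n → f (p + t) < v := by
      intro t
      induction t with
      | zero => intro _; simpa [hp0] using hv
      | succ t ih =>
        intro ht
        rcases hdich (p + (t+1)) ht (by omega) with h | h
        · exact h
        · exfalso
          have := ih (by omega)
          exact hA.h4 x (p+t) (by omega) (by omega) (by omega) (by omega)
            (by rw [show p + t + 1 = p + (t+1) by omega]; omega)
    have := hlow (n - 1 - p) (by omega)
    rw [show p + (n - 1 - p) = n - 1 by omega] at this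
    exact hA.h5 x (by omega) (by omega) (by omega)
  have hd := hdec i le_rfl hij
  have hbi := hb i le_rfl hij.le
  have hbi1 := hb (i+1) (by omega) (by omega)
  -- left part is above
  have hleft : ∀ x, x < i → v + (j - i) < f x := by
    intro x
    induction x with
    | zero =>
      intro h
      rcases hdich 0 (by omega) (by omega) with h' | h'
      · exact (hA.h6 i h (by omega) (by omega) hd).elim
      · exact h'
    | succ x ih =>
      intro h
      rcases hdich (x+1) (by omega) (by omega) with h' | h'
      · exact (hA.h3 x i h (by omega) (by omega) hd (by have := ih (by omega); omega)).elim
      · exact h'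
  -- right part: once above, stays above
  have hup : ∀ a, j < a → a < n → v + (j - i) < f a → ∀ t, a + t < n → v + (j-i) < f (a + t) := by
    intro a ha han hfa t
    induction t with
    | zero => intro _; exact hfa
    | succ t ih =>
      intro ht
      rcases hdich (a + (t+1)) ht (by omega) with h | h
      · have := ih (by omega)
        exact (hA.h1 i (a+t) (by omega) (by omega)
          (by rw [show a + t + 1 = a + (t+1) by omega]; omega) hd (by omega)).elim
      · exact h
  -- low values all right of block, contiguous
  have hmid : ∀ x, j < x → x ≤ p → f x < v := by
    intro x h1 h2
    rcases hdich x (by omega) (by omega) with h | h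
    · exact h
    · have := hup x h1 (by omega) h (p - x) (by omega)
      rw [show x + (p - x) = p by omega] at this
      omega
  obtain ⟨q, hq, hfq⟩ := hf.surj (v - 1) (by have := hf.1 i (by omega); omega)
  -- the interval of low values
  have hlowpos : ∀ x, x < n → f x < v → j < x := by
    intro x hx h
    by_contra hc
    by_cases hxi : x < i
    · have := hleft x hxi; omega
    · have := hb x (by omega) (by omega); omega
  have hlowpre : ∀ x y, j < x → x ≤ y → y < n → f y < v → f x < v := by
    intro x y h1 h2 h3 h4
    rcases hdich x (by omega) (by omega) with h | h
    · exact h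
    · have := hup x h1 (by omega) h (y - x) (by omega)
      rw [show x + (y - x) = y by omega] at this
      omega
  -- the low part is exactly j+1..j+v
  have hcard : ((Finset.range n).filter (fun x => f x < v)).card = v := by
    have : ((Finset.range n).filter (fun x => f x < v)).image f = Finset.range v := by
      ext y
      simp only [Finset.mem_image, Finset.mem_filter, Finset.mem_range]
      constructor
      · rintro ⟨a, ha, rfl⟩; exact ha.2
      · intro hy
        obtain ⟨x, hx, rfl⟩ := hf.surj y (by have := hf.1 i (by omega); omega)
        exact ⟨x, ⟨hx, hy⟩, rfl⟩
    have h2 := congrArg Finset.card this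
    rwa [Finset.card_range, Finset.card_image_of_injOn] at h2
    intro a ha b hb' hab
    simp at ha hb'
    exact hf.2 a b ha.1 hb'.1 hab
  have hlowall : ∀ x, j < x → x ≤ j + v → x < n ∧ f x < v := by
    by_contra hcon
    push Not at hcon
    obtain ⟨x, h1, h2, h3⟩ := hcon
    have hsub : (Finset.range n).filter (fun x => f x < v) ⊆ Finset.Ico (j+1) x := by
      intro y hy
      simp only [Finset.mem_filter, Finset.mem_range, Finset.mem_Ico] at hy ⊢
      refine ⟨hlowpos y hy.1 hy.2, ?_⟩
      by_contra hyx
      have := hlowpre x y h1 (by omega) hy.1 hy.2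
      have := h3 (by omega)
      omega
    have := Finset.card_le_card hsub
    rw [hcard] at this
    simp at this
    omega
  by_cases hv1 : v = 1
  · -- the last block entry is 1
    subst hv1
    have hall : ∀ t, i + t ≤ j → f (i + t) + t ≤ 1 + (j - i) := by
      intro t
      induction t with
      | zero => intro _; have := hb i le_rfl hij.le; simpa using this.2
      | succ t ih =>
        intro ht
        have h1 := ih (by omega)
        have h2 := hdec (i+t) (by omega) (by omega)
        rw [show i + t + 1 = i + (t+1) by omega] at h2
        omega
    have hj1 := hall (j - i) (by omega)
    rw [show i + (j - i) = j by omega] at hj1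
    have hl := hlowall (j+1) (by omega) (by omega)
    have := hZ j (j+1) (by omega) hl.1 (by
      intro x h1 h2
      rcases (by omega : x = j ∨ x = j + 1) with rfl | rfl <;> omega)
    omega
  · have := hZ (j+1) (j+v) (by omega) (hlowall _ (by omega) le_rfl).1 (by
      intro x h1 h2
      have := (hlowall x (by omega) (by omega)).2
      omega)
    omega

theorem simple_of_Z {n f} (hf : PermN n f) (hA : MA n f) (hZ : ZN n f) : SN n f := by
  intro i j v hij hj hb
  by_cases h : i = j
  · exact Or.inl h
  right
  obtain ⟨p, hp, hp0⟩ := hf.surj 0 (by omega)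
  by_cases h1 : j < p
  · exact (key_right hf hA hZ (by omega) hp h1 hp0 hb).elim
  by_cases h2 : p < i
  · refine (key_right hf.rev hA.rev hZ.rev (i := n - 1 - j) (j := n - 1 - i) (v := v)
      (p := n - 1 - p) (by omega) (by omega) (by omega) ?_ ?_).elim
    · simp only [rev]; rw [show n - 1 - (n - 1 - p) = p by omega]; exact hp0
    · rw [show n - 1 - i - (n - 1 - j) = j - i by omega]
      exact block_rev hij hj hb
  · have := hb p (by omega) (by omega)
    refine hZ i j (by omega) hj fun x a b => ?_
    have := hb x a b
    omega

theorem Z_of_simple {n f} (h : SN n f) : ZN n f := by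
  intro i j hij hj hb
  have := h i j 0 hij.le hj (fun x a b => ⟨Nat.zero_le _, by simpa using hb x a b⟩)
  omega

/-- Inflation of `r` at position `p` by the block `s` of length `k+1`. -/
def inf (p k : ℕ) (r s : ℕ → ℕ) : ℕ → ℕ := fun x =>
  if x < p then r x + k else if x ≤ p + k then s (x - p) else r (x - k) + k

/-- Collapse of positions. -/
def col (p k x : ℕ) : ℕ := if x < p then x else if x ≤ p + k then p else x - k

theorem MA_inf {m p k r s} (hr : PermN m r) (hs : PermN (k+1) s) (hp : p < m) (hp0 : r p = 0)
    (hA : MA m r) (hB : MA (k+1) s) : MA (m + k) (inf p k r s) := by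
  have hd : ∀ x, x < m + k →
      (x < p ∧ inf p k r s x = r (col p k x) + k ∧ col p k x = x ∧ 0 < r (col p k x)) ∨
      (p ≤ x ∧ x ≤ p + k ∧ inf p k r s x = s (x - p) ∧ s (x - p) ≤ k ∧ col p k x = p ∧
        r (col p k x) = 0) ∨
      (p + k < x ∧ inf p k r s x = r (col p k x) + k ∧ col p k x = x - k ∧ 0 < r (col p k x)) := by
    intro x hx
    have hpos : ∀ y, y < m → y ≠ p → 0 < r y := by
      intro y hy hyp
      by_contra h
      exact hyp (hr.2 y p hy hp (by omega))
    by_cases h1 : x < p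
    · left
      have : col p k x = x := by simp [col, h1]
      simp only [this, inf, h1, if_true, true_and]
      exact hpos x (by omega) (by omega)
    by_cases h2 : x ≤ p + k
    · right; left
      have : col p k x = p := by simp [col, h1, h2]
      have := hs.1 (x - p) (by omega)
      refine ⟨by omega, h2, by simp [inf, h1, h2], by omega, by simpa, by simp_all⟩
    · right; right
      have : col p k x = x - k := by simp [col, h1, h2]
      simp only [this, inf, h1, h2, if_false, true_and]
      exact ⟨by omega, hpos _ (by omega) (by omega)⟩
  have hc : ∀ x, x < m + k → ¬ (p ≤ x ∧ x + 1 ≤ p + k) → col p k (x+1) = col p k x + 1 := by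
    intro x hx h
    simp only [col]
    split_ifs <;> omega
  have hsb : ∀ x, p ≤ x → x + 1 - p = x - p + 1 := by intros; omega
  have hcm : ∀ x, x < m + k → col p k x < m := by
    intro x hx; simp only [col]; split_ifs <;> omega
  constructor
  · intro i j hij hj a b c
    have di := hd i (by omega)
    have di' := hd (i+1) (by omega)
    have dj := hd j (by omega)
    have dj' := hd (j+1) (by omega)
    have cj' := hcm (j+1) (by omega)
    by_cases bi : p ≤ i ∧ i + 1 ≤ p + k
    · have bj : p ≤ j ∧ j + 1 ≤ p + k := by omega
      rw [hsb i (by omega)] at di'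
      rw [hsb j (by omega)] at dj'
      exact hB.h1 (i-p) (j-p) (by omega) (by omega) (by omega) (by omega) (by omega)
    · have bj : ¬ (p ≤ j ∧ j + 1 ≤ p + k) := by omega
      rw [hc i (by omega) bi] at di'
      rw [hc j (by omega) bj] at dj' cj'
      exact hA.h1 (col p k i) (col p k j) (by omega) (by omega) (by omega) (by omega) (by omega)
  · intro i j hij hj a b c
    have di := hd i (by omega)
    have di' := hd (i+1) (by omega)
    have dj := hd j (by omega)
    have dj' := hd (j+1) (by omega)
    have cj' := hcm (j+1) (by omega)
    by_cases bi : p ≤ i ∧ i + 1 ≤ p + k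
    · have bj : p ≤ j ∧ j + 1 ≤ p + k := by omega
      rw [hsb i (by omega)] at di'
      rw [hsb j (by omega)] at dj'
      exact hB.h2 (i-p) (j-p) (by omega) (by omega) (by omega) (by omega) (by omega)
    · have bj : ¬ (p ≤ j ∧ j + 1 ≤ p + k) := by omega
      rw [hc i (by omega) bi] at di'
      rw [hc j (by omega) bj] at dj' cj'
      exact hA.h2 (col p k i) (col p k j) (by omega) (by omega) (by omega) (by omega) (by omega)
  · intro i j hij hj a b c
    have di := hd i (by omega)
    have di' := hd (i+1) (by omega)
    have dj := hd j (by omega)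
    have dj' := hd (j+1) (by omega)
    have cj' := hcm (j+1) (by omega)
    by_cases bj : p ≤ j ∧ j + 1 ≤ p + k
    · rw [hsb j (by omega)] at dj'
      by_cases bi : p ≤ i ∧ i + 1 ≤ p + k
      · rw [hsb i (by omega)] at di'
        exact hB.h3 (i-p) (j-p) (by omega) (by omega) (by omega) (by omega) (by omega)
      · have e : i + 1 - p = 0 := by omega
        rw [e] at di'
        exact hB.h6 (j-p) (by omega) (by omega) (by omega) (by omega)
    · have bi : ¬ (p ≤ i ∧ i + 1 ≤ p + k) := by omega
      rw [hc i (by omega) bi] at di'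
      rw [hc j (by omega) bj] at dj' cj'
      exact hA.h3 (col p k i) (col p k j) (by omega) (by omega) (by omega) (by omega) (by omega)
  · intro i j hij hj a b c
    have di := hd i (by omega)
    have di' := hd (i+1) (by omega)
    have dj := hd j (by omega)
    have dj' := hd (j+1) (by omega)
    have cj' := hcm (j+1) (by omega)
    by_cases bi : p ≤ i ∧ i + 1 ≤ p + k
    · rw [hsb i (by omega)] at di'
      by_cases bj : p ≤ j ∧ j + 1 ≤ p + k
      · rw [hsb j (by omega)] at dj'
        exact hB.h4 (i-p) (j-p) (by omega) (by omega) (by omega) (by omega) (by omega)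
      · have e : j - p = k + 1 - 1 := by omega
        rw [e] at dj
        exact hB.h5 (i-p) (by omega) (by omega) (by omega)
    · have bj : ¬ (p ≤ j ∧ j + 1 ≤ p + k) := by omega
      rw [hc i (by omega) bi] at di'
      rw [hc j (by omega) bj] at dj' cj'
      exact hA.h4 (col p k i) (col p k j) (by omega) (by omega) (by omega) (by omega) (by omega)
  · intro i hi a b
    have di := hd i (by omega)
    have di' := hd (i+1) (by omega)
    have dl := hd (m+k-1) (by omega)
    by_cases bi : p ≤ i ∧ i + 1 ≤ p + k
    · rw [hsb i (by omega)] at di'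
      have e : m + k - 1 - p = k + 1 - 1 := by omega
      rw [e] at dl
      exact hB.h5 (i-p) (by omega) (by omega) (by omega)
    · rw [hc i (by omega) bi] at di'
      have e : col p k (m+k-1) = m - 1 := by omega
      rw [e] at dl
      exact hA.h5 (col p k i) (by omega) (by omega) (by omega)
  · intro j hj0 hj a b
    have dj := hd j (by omega)
    have dj' := hd (j+1) (by omega)
    have dl := hd 0 (by omega)
    have cj' := hcm (j+1) (by omega)
    by_cases bj : p ≤ j ∧ j + 1 ≤ p + k
    · rw [hsb j (by omega)] at dj'
      rw [Nat.zero_sub] at dl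
      exact hB.h6 (j-p) (by omega) (by omega) (by omega) (by omega)
    · rw [hc j (by omega) bj] at dj' cj'
      have e : col p k 0 = 0 := by omega
      rw [e] at dl
      exact hA.h6 (col p k j) (by omega) (by omega) (by omega) (by omega)

theorem MA_of_inf {m p k r s} (hr : PermN m r) (hs : PermN (k+1) s) (hp : p < m) (hp0 : r p = 0)
    (h : MA (m + k) (inf p k r s)) : MA m r ∧ MA (k+1) s := by
  have hpos : ∀ y, y < m → y ≠ p → 0 < r y := by
    intro y hy hyp
    by_contra h
    exact hyp (hr.2 y p hy hp (by omega))
  have hin : ∀ y, y ≤ k → inf p k r s (p + y) = s y := by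
    intro y hy
    simp only [inf]
    rw [if_neg (by omega), if_pos (by omega), Nat.add_sub_cancel_left]
  have hlo : ∀ y, y < p → inf p k r s y = r y + k := by
    intro y hy
    simp only [inf]
    rw [if_pos (by omega)]
  have hhi : ∀ y, p < y → inf p k r s (y + k) = r y + k := by
    intro y hy
    simp only [inf]
    rw [if_neg (by omega), if_neg (by omega), Nat.add_sub_cancel]
  constructor
  · have key : ∀ y, y + 1 < m → ∃ a, (a = y ∧ y < p ∨ a = y + k ∧ p ≤ y) ∧
        inf p k r s a ≤ r y + k ∧ (0 < r y → inf p k r s a = r y + k) ∧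
        inf p k r s (a+1) ≤ r (y+1) + k ∧ (0 < r (y+1) → inf p k r s (a+1) = r (y+1) + k) := by
      intro y hy
      rcases Nat.lt_trichotomy y p with hyp | hyp | hyp
      · refine ⟨y, by omega, ?_⟩
        rw [hlo y hyp]
        refine ⟨le_rfl, fun _ => rfl, ?_⟩
        by_cases e : y + 1 = p
        · have := hin 0 (by omega)
          have := hs.1 0 (by omega)
          rw [e, hp0]
          simp_all
        · rw [hlo (y+1) (by omega)]
          exact ⟨le_rfl, fun _ => rfl⟩
      · subst hyp
        refine ⟨y + k, by omega, ?_⟩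
        rw [hin k le_rfl, show y + k + 1 = (y + 1) + k by omega, hhi (y+1) (by omega), hp0]
        have := hs.1 k (by omega)
        exact ⟨by omega, by omega, le_rfl, fun _ => rfl⟩
      · refine ⟨y + k, by omega, ?_⟩
        rw [hhi y hyp, show y + k + 1 = (y + 1) + k by omega, hhi (y+1) (by omega)]
        exact ⟨le_rfl, fun _ => rfl, le_rfl, fun _ => rfl⟩
    constructor
    · intro i j hij hj x y z
      obtain ⟨a, ha⟩ := key i (by omega)
      obtain ⟨b, hb⟩ := key j (by omega)
      exact h.h1 a b (by omega) (by omega) (by omega) (by omega) (by omega)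
    · intro i j hij hj x y z
      obtain ⟨a, ha⟩ := key i (by omega)
      obtain ⟨b, hb⟩ := key j (by omega)
      exact h.h2 a b (by omega) (by omega) (by omega) (by omega) (by omega)
    · intro i j hij hj x y z
      obtain ⟨a, ha⟩ := key i (by omega)
      obtain ⟨b, hb⟩ := key j (by omega)
      exact h.h3 a b (by omega) (by omega) (by omega) (by omega) (by omega)
    · intro i j hij hj x y z
      obtain ⟨a, ha⟩ := key i (by omega)
      obtain ⟨b, hb⟩ := key j (by omega)
      exact h.h4 a b (by omega) (by omega) (by omega) (by omega) (by omega)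
    · intro i hi x y
      obtain ⟨a, ha⟩ := key i (by omega)
      obtain ⟨b, hb⟩ := key (m - 2) (by omega)
      have e1 : m - 2 + 1 = m - 1 := by omega
      have e2 : b + 1 = m + k - 1 := by
        by_cases hh : m - 1 = p
        · -- the zero is last: then the last block entry is used instead
          exfalso
          have h1 := hin k le_rfl
          have h2 := hs.1 k (by omega)
          refine h.h5 a (by omega) ?_ (by omega)
          rw [show m + k - 1 = p + k by omega]
          omega
        · omega
      rw [e2, e1] at hb
      exact h.h5 a (by omega) (by omega) (by omega)
    · intro j hj0 hj x y
      obtain ⟨b, hb⟩ := key j (by omega)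
      have h0 : inf p k r s 0 ≤ r 0 + k := by
        by_cases e : p = 0
        · subst e
          have h1 := hin 0 (by omega)
          have h2 := hs.1 0 (by omega)
          rw [Nat.add_zero] at h1
          omega
        · rw [hlo 0 (by omega)]
      exact h.h6 b (by omega) (by omega) (by omega) (by omega)
  · constructor
    · intro i j hij hj x y z
      rw [← hin _ (by omega), ← hin _ (by omega)] at x y z
      simp only [← Nat.add_assoc] at x y z
      exact h.h1 (p+i) (p+j) (by omega) (by omega) x y z
    · intro i j hij hj x y z
      rw [← hin _ (by omega), ← hin _ (by omega)] at x y z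
      simp only [← Nat.add_assoc] at x y z
      exact h.h2 (p+i) (p+j) (by omega) (by omega) x y z
    · intro i j hij hj x y z
      rw [← hin _ (by omega), ← hin _ (by omega)] at x y z
      simp only [← Nat.add_assoc] at x y z
      exact h.h3 (p+i) (p+j) (by omega) (by omega) x y z
    · intro i j hij hj x y z
      rw [← hin _ (by omega), ← hin _ (by omega)] at x y z
      simp only [← Nat.add_assoc] at x y z
      exact h.h4 (p+i) (p+j) (by omega) (by omega) x y z
    · intro i hi x y
      rw [Nat.add_sub_cancel] at x hi
      have hsi := hs.1 (i+1) (by omega)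
      have h1 := hin i (by omega)
      have h2 := hin (i+1) (by omega)
      have h3 := hin k (by omega)
      rw [← Nat.add_assoc] at h2
      by_cases e : p + 1 = m
      · exact h.h5 (p+i) (by omega) (by rw [show m + k - 1 = p + k by omega]; omega) (by omega)
      · have h4 := hhi (p+1) (by omega)
        have h5 := hpos (p+1) (by omega) (by omega)
        rw [show p + 1 + k = p + k + 1 by omega] at h4
        exact h.h4 (p+i) (p+k) (by omega) (by omega) (by omega) (by omega) (by omega)
    · intro j hj0 hj x y
      have hsi := hs.1 j (by omega)
      have h1 := hin j (by omega)
      have h2 := hin (j+1) (by omega)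
      have h3 := hin 0 (by omega)
      rw [← Nat.add_assoc] at h2
      rw [Nat.add_zero] at h3
      by_cases e : p = 0
      · subst e
        exact h.h6 (0+j) (by omega) (by omega) (by omega) (by omega)
      · have h4 := hlo (p-1) (by omega)
        have h5 := hpos (p-1) (by omega) (by omega)
        exact h.h3 (p-1) (p+j) (by omega) (by omega)
          (by rw [show p - 1 + 1 = p by omega]; omega) (by omega) (by omega)

theorem PermN_inf {m p k r s} (hr : PermN m r) (hs : PermN (k+1) s) (hp : p < m) (hp0 : r p = 0) :
    PermN (m + k) (inf p k r s) := by
  have hpos : ∀ y, y < m → y ≠ p → 0 < r y := by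
    intro y hy hyp
    by_contra h
    exact hyp (hr.2 y p hy hp (by omega))
  have hd : ∀ x, x < m + k →
      (x < p ∧ inf p k r s x = r x + k ∧ 0 < r x ∧ r x < m) ∨
      (p ≤ x ∧ x ≤ p + k ∧ inf p k r s x = s (x - p) ∧ s (x - p) ≤ k) ∨
      (p + k < x ∧ inf p k r s x = r (x - k) + k ∧ 0 < r (x - k) ∧ r (x - k) < m) := by
    intro x hx
    by_cases h1 : x < p
    · left
      exact ⟨h1, by simp [inf, h1], hpos _ (by omega) (by omega), hr.1 _ (by omega)⟩
    by_cases h2 : x ≤ p + k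
    · right; left
      have := hs.1 (x - p) (by omega)
      exact ⟨by omega, h2, by simp [inf, h1, h2], by omega⟩
    · right; right
      exact ⟨by omega, by simp [inf, h1, h2], hpos _ (by omega) (by omega), hr.1 _ (by omega)⟩
  constructor
  · intro x hx
    have := hd x hx
    omega
  · intro x y hx hy h
    rcases hd x hx with h1 | h1 | h1 <;> rcases hd y hy with h2 | h2 | h2 <;> try omega
    · exact hr.2 _ _ (by omega) (by omega) (by omega)
    · have := hr.2 x (y - k) (by omega) (by omega) (by omega)
      omega
    · have := hs.2 (x - p) (y - p) (by omega) (by omega) (by omega)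
      omega
    · have := hr.2 (x - k) y (by omega) (by omega) (by omega)
      omega
    · have := hr.2 (x - k) (y - k) (by omega) (by omega) (by omega)
      omega

/-- Decomposition along a bottom block. -/
theorem decomp {m p k f} (hf : PermN (m + k) f) (hp : p < m)
    (hb : ∀ x, p ≤ x → x ≤ p + k → f x ≤ k) :
    ∃ r s, PermN m r ∧ PermN (k+1) s ∧ r p = 0 ∧ ∀ x, x < m + k → inf p k r s x = f x := by
  have hout : ∀ x, x < m + k → x < p ∨ p + k < x → k < f x := by
    intro x hx h
    by_contra hc
    have := pigeon hf (i := p) (j := p + k) (v := 0) (by omega) (by omega)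
      (fun x a b => ⟨Nat.zero_le _, by have := hb x a b; omega⟩) x hx (Nat.zero_le _) (by omega)
    omega
  refine ⟨fun y => if y < p then f y - k else if y = p then 0 else f (y + k) - k,
    fun y => f (p + y), ?_, ?_, ?_, ?_⟩
  · have hd : ∀ y, y < m →
      (y < p ∧ (if y < p then f y - k else if y = p then 0 else f (y + k) - k) = f y - k
        ∧ k < f y ∧ f y < m + k) ∨
      (y = p ∧ (if y < p then f y - k else if y = p then 0 else f (y + k) - k) = 0) ∨
      (p < y ∧ (if y < p then f y - k else if y = p then 0 else f (y + k) - k) = f (y + k) - k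
        ∧ k < f (y + k) ∧ f (y + k) < m + k) := by
      intro y hy
      rcases Nat.lt_trichotomy y p with h | h | h
      · left
        exact ⟨h, by simp [h], hout _ (by omega) (by omega), hf.1 _ (by omega)⟩
      · right; left
        exact ⟨h, by simp [h]⟩
      · right; right
        refine ⟨h, ?_, hout _ (by omega) (by omega), hf.1 _ (by omega)⟩
        rw [if_neg (by omega), if_neg (by omega)]
    constructor
    · intro y hy
      have := hd y hy
      beta_reduce
      omega
    · intro x y hx hy h
      beta_reduce at h
      rcases hd x hx with h1 | h1 | h1 <;> rcases hd y hy with h2 | h2 | h2 <;> try omega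
      · exact hf.2 _ _ (by omega) (by omega) (by omega)
      · have := hf.2 x (y + k) (by omega) (by omega) (by omega)
        omega
      · have := hf.2 (x + k) y (by omega) (by omega) (by omega)
        omega
      · have := hf.2 (x + k) (y + k) (by omega) (by omega) (by omega)
        omega
  · constructor
    · intro y hy
      have := hb (p + y) (by omega) (by omega)
      beta_reduce
      omega
    · intro x y hx hy h
      have := hf.2 _ _ (by omega) (by omega) h
      omega
  · simp
  · intro x hx
    simp only [inf]
    by_cases h1 : x < p
    · have := hout x hx (by omega)
      rw [if_pos h1, if_pos h1]; omega
    by_cases h2 : x ≤ p + k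
    · rw [if_neg h1, if_pos h2]; congr 1; omega
    · have := hout x hx (by omega)
      rw [if_neg h1, if_neg h2, if_neg (by omega), if_neg (by omega),
        show x - k + k = x by omega]
      omega

theorem MA.congr {n f g} (h : MA n f) (e : ∀ x, x < n → f x = g x) : MA n g := by
  constructor
  · intro i j hij hj
    rw [← e _ (by omega), ← e _ (by omega), ← e _ (by omega), ← e _ (by omega)]
    exact h.h1 i j hij hj
  · intro i j hij hj
    rw [← e _ (by omega), ← e _ (by omega), ← e _ (by omega), ← e _ (by omega)]
    exact h.h2 i j hij hj
  · intro i j hij hj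
    rw [← e _ (by omega), ← e _ (by omega), ← e _ (by omega), ← e _ (by omega)]
    exact h.h3 i j hij hj
  · intro i j hij hj
    rw [← e _ (by omega), ← e _ (by omega), ← e _ (by omega), ← e _ (by omega)]
    exact h.h4 i j hij hj
  · intro i hi
    rw [← e _ (by omega), ← e _ (by omega), ← e _ (by omega)]
    exact h.h5 i hi
  · intro i h0 hi
    rw [← e _ (by omega), ← e _ (by omega), ← e _ (by omega)]
    exact h.h6 i h0 hi

theorem SN.congr {n f g} (h : SN n f) (e : ∀ x, x < n → f x = g x) : SN n g := by
  intro i j v hij hj hb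
  refine h i j v hij hj fun x a b => ?_
  rw [e x (by omega)]
  exact hb x a b

/-- Bottom blocks of size `k+1` of an inflation pull back to bottom blocks of `r`. -/
theorem no_bigger {m p k r s} (hr : PermN m r) (hs : PermN (k+1) s) (hp : p < m) (hp0 : r p = 0)
    (hZ : ZN m r) {q l : ℕ} (hkl : k < l) (hql : q + l < m + k)
    (hb : ∀ x, q ≤ x → x ≤ q + l → inf p k r s x ≤ l) : l = m + k - 1 := by
  have hP := PermN_inf hr hs hp hp0
  have hin : ∀ y, y ≤ k → inf p k r s (p + y) ≤ k := by
    intro y hy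
    simp only [inf]
    rw [if_neg (by omega), if_pos (by omega), Nat.add_sub_cancel_left]
    have := hs.1 y (by omega)
    omega
  have hpg := pigeon hP (i := q) (j := q + l) (v := 0) (by omega) (by omega)
      (fun x a b => ⟨Nat.zero_le _, by have := hb x a b; omega⟩)
  have h1 := hpg p (by omega) (Nat.zero_le _) (by have := hin 0 (by omega); rw [Nat.add_zero] at this; omega)
  have h2 := hpg (p + k) (by omega) (Nat.zero_le _) (by have := hin k (by omega); omega)
  have := hZ q (q + (l - k)) (by omega) (by omega) (by
    intro x a b
    rcases Nat.lt_trichotomy x p with h | h | h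
    · have := hb x (by omega) (by omega)
      simp only [inf] at this
      rw [if_pos h] at this
      omega
    · rw [h, hp0]; omega
    · have := hb (x + k) (by omega) (by omega)
      simp only [inf] at this
      rw [if_neg (by omega), if_neg (by omega), Nat.add_sub_cancel] at this
      omega)
  omega

theorem inf_block {m p k r s} (hs : PermN (k+1) s) (_hp : p < m) :
    ∀ x, p ≤ x → x ≤ p + k → inf p k r s x ≤ k := by
  intro x h1 h2
  simp only [inf]
  rw [if_neg (by omega), if_pos (by omega)]
  have := hs.1 (x - p) (by omega)
  omega

theorem block_le {m m' p k r s p' k' r' s'} (hr : PermN m r) (hs : PermN (k+1) s) (hp : p < m)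
    (hp0 : r p = 0) (hZ : ZN m r) (hs' : PermN (k'+1) s') (hp' : p' < m') (hm : 2 ≤ m')
    (hmm : m + k = m' + k')
    (he : ∀ x, x < m + k → inf p k r s x = inf p' k' r' s' x) : k' ≤ k := by
  by_contra hc
  have := no_bigger hr hs hp hp0 hZ (q := p') (l := k') (by omega) (by omega) (by
    intro x a b
    rw [he x (by omega)]
    exact inf_block hs' hp' x a b)
  omega

theorem inf_inj {m p k r s p' r' s'} (hr : PermN m r) (hs : PermN (k+1) s) (hp : p < m)
    (hp0 : r p = 0) (hp0' : r' p' = 0) (hs' : PermN (k+1) s') (hp' : p' < m)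
    (he : ∀ x, x < m + k → inf p k r s x = inf p' k r' s' x) :
    (∀ x, x < m → r x = r' x) ∧ ∀ x, x < k + 1 → s x = s' x := by
  have hP := PermN_inf hr hs hp hp0
  have hpg := pigeon hP (i := p) (j := p + k) (v := 0) (by omega) (by omega)
      (fun x a b => ⟨Nat.zero_le _, by have := inf_block (r := r) hs hp x a b; omega⟩)
  have e : p = p' := by
    have h1 := hpg p' (by omega) (Nat.zero_le _) (by
      rw [he _ (by omega)]
      have := inf_block (r := r') hs' hp' p' (by omega) (by omega); omega)
    have h2 := hpg (p' + k) (by omega) (Nat.zero_le _) (by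
      rw [he _ (by omega)]
      have := inf_block (r := r') hs' hp' (p' + k) (by omega) (by omega); omega)
    omega
  subst e
  constructor
  · intro x hx
    rcases Nat.lt_trichotomy x p with h | h | h
    · have := he x (by omega)
      simp only [inf] at this
      rw [if_pos h, if_pos h] at this
      omega
    · rw [h, hp0, hp0']
    · have := he (x + k) (by omega)
      simp only [inf] at this
      rw [if_neg (by omega), if_neg (by omega), Nat.add_sub_cancel,
        if_neg (by omega), if_neg (by omega)] at this
      omega
  · intro x hx
    have := he (p + x) (by omega)
    simp only [inf] at this
    rw [if_neg (by omega), if_pos (by omega), Nat.add_sub_cancel_left,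
        if_neg (by omega), if_pos (by omega)] at this
    exact this

/-- Existence of the decomposition. -/
theorem exists_decomp {n f} (hn : 2 ≤ n) (hf : PermN n f) (hA : MA n f) :
    ∃ m k p r s, 2 ≤ m ∧ m + k = n ∧ p < m ∧ PermN m r ∧ PermN (k+1) s ∧ r p = 0 ∧
      MA m r ∧ SN m r ∧ MA (k+1) s ∧ ∀ x, x < n → inf p k r s x = f x := by
  classical
  let P : ℕ → Prop := fun k => ∃ p, p + k < n ∧ ∀ x, p ≤ x → x ≤ p + k → f x ≤ k
  have hP0 : P 0 := by
    obtain ⟨p, hp, hp0⟩ := hf.surj 0 (by omega)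
    refine ⟨p, by omega, fun x a b => ?_⟩
    rw [show x = p by omega, hp0]
  obtain ⟨k, hk⟩ : ∃ k, k = Nat.findGreatest P (n - 2) := ⟨_, rfl⟩
  have hkn : k ≤ n - 2 := hk ▸ Nat.findGreatest_le _
  have hPk : P k := hk ▸ Nat.findGreatest_spec (m := 0) (Nat.zero_le _) hP0
  have hmax : ∀ l, k < l → l ≤ n - 2 → ¬ P l := fun l h1 h2 =>
    Nat.findGreatest_is_greatest (hk ▸ h1) h2
  obtain ⟨p, hp, hb⟩ := hPk
  obtain ⟨m, hm⟩ : ∃ m, m + k = n := ⟨n - k, by omega⟩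
  subst hm
  obtain ⟨r, s, hr, hs, hp0, he⟩ := decomp hf (m := m) (p := p) (by omega) hb
  have hAi : MA (m + k) (inf p k r s) := hA.congr fun x hx => (he x hx).symm
  obtain ⟨hAr, hAs⟩ := MA_of_inf hr hs (by omega) hp0 hAi
  refine ⟨m, k, p, r, s, by omega, rfl, by omega, hr, hs, hp0, hAr, ?_, hAs, he⟩
  apply simple_of_Z hr hAr
  intro i j hij hj hbij
  by_contra hcon
  have hpij := pigeon hr (i := i) (j := j) (v := 0) hij.le hj
    (fun x a b => ⟨Nat.zero_le _, by have := hbij x a b; omega⟩) p (by omega) (by omega) (by omega)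
  refine hmax (j - i + k) (by omega) (by omega) ⟨i, by omega, fun x a b => ?_⟩
  rw [← he x (by omega)]
  simp only [inf]
  split_ifs with h1 h2
  · have := hbij x (by omega) (by omega); omega
  · have := hs.1 (x - p) (by omega); omega
  · have := hbij (x - k) (by omega) (by omega); omega

/-! Transfer to `Equiv.Perm (Fin n)`. -/

/-- Extension of a permutation of `Fin n` to `ℕ`. -/
def ext {n : ℕ} (π : Equiv.Perm (Fin n)) : ℕ → ℕ := fun x => if h : x < n then (π ⟨x, h⟩ : ℕ) else x

theorem ext_fin {n : ℕ} (π : Equiv.Perm (Fin n)) (x : Fin n) : ext π x = π x := by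
  simp [ext]

theorem ext_lt {n : ℕ} (π : Equiv.Perm (Fin n)) {x : ℕ} (h : x < n) : ext π x = π ⟨x, h⟩ := by
  simp [ext, h]

theorem ext_perm {n : ℕ} (π : Equiv.Perm (Fin n)) : PermN n (ext π) := by
  constructor
  · intro x hx
    rw [ext_lt π hx]
    exact (π _).isLt
  · intro x y hx hy h
    rw [ext_lt π hx, ext_lt π hy] at h
    have := π.injective (Fin.ext h)
    simpa using this

theorem ext_inj {n : ℕ} {π τ : Equiv.Perm (Fin n)} (h : ∀ x, x < n → ext π x = ext τ x) :
    π = τ := by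
  ext x
  have := h x x.isLt
  rwa [ext_fin, ext_fin] at this

theorem exists_perm {n : ℕ} {f} (hf : PermN n f) :
    ∃ π : Equiv.Perm (Fin n), ∀ x, x < n → ext π x = f x := by
  let g : Fin n → Fin n := fun x => ⟨f x, hf.1 x x.isLt⟩
  have hg : Function.Bijective g := by
    rw [← Finite.injective_iff_bijective]
    intro x y h
    have := hf.2 x y x.isLt y.isLt (by simpa [g] using h)
    exact Fin.ext this
  refine ⟨Equiv.ofBijective g hg, fun x hx => ?_⟩
  rw [ext_lt _ hx]
  rfl

theorem memA_iff {n : ℕ} (π : Equiv.Perm (Fin n)) : MemA π ↔ MA n (ext π) := by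
  constructor
  · rintro ⟨h1, h2, h3, h4, h5, h6⟩
    constructor
    · intro i j hij hj a b c
      rw [ext_lt π (by omega), ext_lt π (by omega)] at a b c
      exact h1 ⟨⟨i, by omega⟩, ⟨i+1, by omega⟩, ⟨j, by omega⟩, ⟨j+1, by omega⟩, rfl, rfl, hij, a, b, c⟩
    · intro i j hij hj a b c
      rw [ext_lt π (by omega), ext_lt π (by omega)] at a b c
      exact h2 ⟨⟨i, by omega⟩, ⟨i+1, by omega⟩, ⟨j, by omega⟩, ⟨j+1, by omega⟩, rfl, rfl, hij, a, b, c⟩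
    · intro i j hij hj a b c
      rw [ext_lt π (by omega), ext_lt π (by omega)] at a b c
      exact h3 ⟨⟨i, by omega⟩, ⟨i+1, by omega⟩, ⟨j, by omega⟩, ⟨j+1, by omega⟩, rfl, rfl, hij, a, b, c⟩
    · intro i j hij hj a b c
      rw [ext_lt π (by omega), ext_lt π (by omega)] at a b c
      exact h4 ⟨⟨i, by omega⟩, ⟨i+1, by omega⟩, ⟨j, by omega⟩, ⟨j+1, by omega⟩, rfl, rfl, hij, a, b, c⟩
    · intro i hi a b
      rw [ext_lt π (by omega), ext_lt π (by omega)] at a b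
      exact h5 ⟨⟨i, by omega⟩, ⟨i+1, by omega⟩, ⟨n-1, by omega⟩, rfl, rfl, hi, a, b⟩
    · intro j h0 hj a b
      rw [ext_lt π (by omega), ext_lt π (by omega)] at a b
      exact h6 ⟨⟨0, by omega⟩, ⟨j, by omega⟩, ⟨j+1, by omega⟩, rfl, rfl, h0, a, b⟩
  · intro h
    refine ⟨?_, ?_, ?_, ?_, ?_, ?_⟩
    · rintro ⟨i, i', j, j', hi, hj, hij, a, b, c⟩
      rw [Fin.lt_def, ← ext_fin, ← ext_fin] at a b c
      rw [hi] at a b hij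
      have := j'.isLt
      rw [hj] at a this
      exact h.h1 i j hij this a b c
    · rintro ⟨i, i', j, j', hi, hj, hij, a, b, c⟩
      rw [Fin.lt_def, ← ext_fin, ← ext_fin] at a b c
      rw [hi] at c hij
      have := j'.isLt
      rw [hj] at b c this
      exact h.h2 i j hij this a b c
    · rintro ⟨i, i', j, j', hi, hj, hij, a, b, c⟩
      rw [Fin.lt_def, ← ext_fin, ← ext_fin] at a b c
      rw [hi] at a hij
      have := j'.isLt
      rw [hj] at a b this
      exact h.h3 i j hij this a b c
    · rintro ⟨i, i', j, j', hi, hj, hij, a, b, c⟩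
      rw [Fin.lt_def, ← ext_fin, ← ext_fin] at a b c
      rw [hi] at b c hij
      have := j'.isLt
      rw [hj] at c this
      exact h.h4 i j hij this a b c
    · rintro ⟨i, i', l, hi, hl, hij, a, b⟩
      rw [Fin.lt_def, ← ext_fin, ← ext_fin] at a b
      rw [hi] at b hij
      rw [hl] at a hij
      exact h.h5 i hij a b
    · rintro ⟨f, j, j', hf, hj, h0, a, b⟩
      rw [Fin.lt_def, ← ext_fin, ← ext_fin] at a b
      have := j'.isLt
      rw [hj] at a b this
      rw [hf] at a
      exact h.h6 j h0 this a b

theorem simple_iff {n : ℕ} (π : Equiv.Perm (Fin n)) : IsSimplePerm π ↔ SN n (ext π) := by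
  constructor
  · intro h i j v hij hj hb
    have := h ⟨i, by omega⟩ ⟨j, hj⟩ hij ⟨v, fun x a b => by
      have := hb x a b
      rwa [ext_fin] at this⟩
    simpa using this
  · rintro h i j hij ⟨v, hb⟩
    have := h i j v hij j.isLt (fun x a b => by
      have hx : x < n := lt_of_le_of_lt b j.isLt
      rw [ext_lt π hx]
      exact hb ⟨x, hx⟩ a b)
    rcases this with h | h
    · exact Or.inl (Fin.ext h)
    · exact Or.inr h

/-- Inflation, at the level of elements of the class. -/
theorem exists_infl {n i : ℕ} (hi : 2 ≤ i ∧ i ≤ n)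
    (ρ : {π : Equiv.Perm (Fin i) // MemA π ∧ IsSimplePerm π})
    (σ : {π : Equiv.Perm (Fin (n - i + 1)) // MemA π}) :
    ∃ π : {π : Equiv.Perm (Fin n) // MemA π}, ∃ p, p < i ∧ ext ρ.1 p = 0 ∧
      ∀ x, x < n → ext π.1 x = inf p (n - i) (ext ρ.1) (ext σ.1) x := by
  obtain ⟨p, hp, hp0⟩ := (ext_perm ρ.1).surj 0 (by omega)
  have e : i + (n - i) = n := by omega
  have hP := PermN_inf (ext_perm ρ.1) (ext_perm σ.1) hp hp0
  have hM := MA_inf (ext_perm ρ.1) (ext_perm σ.1) hp hp0 ((memA_iff _).1 ρ.2.1) ((memA_iff _).1 σ.2)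
  rw [e] at hP hM
  obtain ⟨π, hπ⟩ := exists_perm hP
  exact ⟨⟨π, (memA_iff π).2 (hM.congr fun x hx => (hπ x hx).symm)⟩, p, hp, hp0, hπ⟩

theorem main (n : ℕ) (hn : 2 ≤ n) :
    aCard n = ∑ i ∈ Finset.Icc 2 n, sCard i * aCard (n - i + 1) := by
  have hmem : ∀ i : Finset.Icc 2 n, 2 ≤ i.1 ∧ i.1 ≤ n := fun i => Finset.mem_Icc.1 i.2
  choose F P hP hP0 hF using fun (i : Finset.Icc 2 n) => exists_infl (hmem i)
  let G : (Σ i : Finset.Icc 2 n, {π : Equiv.Perm (Fin i.1) // MemA π ∧ IsSimplePerm π} ×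
      {π : Equiv.Perm (Fin (n - i.1 + 1)) // MemA π}) → {π : Equiv.Perm (Fin n) // MemA π} :=
    fun t => F t.1 t.2.1 t.2.2
  have hG : Function.Bijective G := by
    constructor
    · rintro ⟨i, ρ, σ⟩ ⟨i', ρ', σ'⟩ h
      have hFF : F i ρ σ = F i' ρ' σ' := h
      have hi := hmem i
      have hi' := hmem i'
      have he : ∀ x, x < n → inf (P i ρ σ) (n - i) (ext ρ.1) (ext σ.1) x =
          inf (P i' ρ' σ') (n - i') (ext ρ'.1) (ext σ'.1) x := by
        intro x hx
        rw [← hF i ρ σ x hx, ← hF i' ρ' σ' x hx, hFF]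
      have h1 := block_le (ext_perm ρ.1) (ext_perm σ.1) (hP i ρ σ) (hP0 i ρ σ)
        (Z_of_simple ((simple_iff _).1 ρ.2.2)) (ext_perm σ'.1) (hP i' ρ' σ') hi'.1 (by omega)
        (fun x hx => he x (by omega))
      have h2 := block_le (ext_perm ρ'.1) (ext_perm σ'.1) (hP i' ρ' σ') (hP0 i' ρ' σ')
        (Z_of_simple ((simple_iff _).1 ρ'.2.2)) (ext_perm σ.1) (hP i ρ σ) hi.1 (by omega)
        (fun x hx => (he x (by omega)).symm)
      have hii : i = i' := Subtype.ext (by omega)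
      subst hii
      have h3 := inf_inj (ext_perm ρ.1) (ext_perm σ.1) (hP i ρ σ) (hP0 i ρ σ) (hP0 i ρ' σ')
        (ext_perm σ'.1) (hP i ρ' σ') (fun x hx => he x (by omega))
      have e1 : ρ = ρ' := Subtype.ext (ext_inj h3.1)
      have e2 : σ = σ' := Subtype.ext (ext_inj h3.2)
      rw [e1, e2]
    · intro π
      obtain ⟨m, k, p, r, s, hm, hmk, hp, hr, hs, hp0, hAr, hSr, hAs, he⟩ :=
        exists_decomp hn (ext_perm π.1) ((memA_iff _).1 π.2)
      obtain ⟨ρ, hρ⟩ := exists_perm hr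
      obtain rfl : k = n - m := by omega
      obtain ⟨σ, hσ⟩ := exists_perm hs
      let i : Finset.Icc 2 n := ⟨m, Finset.mem_Icc.2 ⟨hm, by omega⟩⟩
      let ρ' : {π : Equiv.Perm (Fin i.1) // MemA π ∧ IsSimplePerm π} :=
        ⟨ρ, (memA_iff _).2 (hAr.congr fun x hx => (hρ x hx).symm),
          (simple_iff _).2 (hSr.congr fun x hx => (hρ x hx).symm)⟩
      let σ' : {π : Equiv.Perm (Fin (n - i.1 + 1)) // MemA π} :=
        ⟨σ, (memA_iff _).2 (hAs.congr fun x hx => (hσ x hx).symm)⟩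
      refine ⟨⟨i, ρ', σ'⟩, Subtype.ext (ext_inj fun x hx => ?_)⟩
      have h1 : ext (G ⟨i, ρ', σ'⟩).1 x = inf (P i ρ' σ') (n - m) (ext ρ) (ext σ) x :=
        hF i ρ' σ' x hx
      have hPp : P i ρ' σ' = p := by
        have a : ext ρ (P i ρ' σ') = 0 := hP0 i ρ' σ'
        have b : P i ρ' σ' < m := hP i ρ' σ'
        exact (ext_perm ρ).2 _ _ b hp (by rw [a, hρ p hp, hp0])
      rw [h1, hPp, ← he x hx]
      simp only [inf]
      split_ifs
      · rw [hρ x (by omega)]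
      · rw [hσ _ (by omega)]
      · rw [hρ _ (by omega)]
  have hc := Nat.card_eq_of_bijective G hG
  unfold aCard sCard
  rw [← hc, Nat.card_sigma, ← Finset.sum_coe_sort (Finset.Icc 2 n)]
  refine Finset.sum_congr rfl fun i _ => ?_
  rw [Nat.card_prod]

theorem one : aCard 1 = 1 := by
  unfold aCard
  rw [Nat.card_eq_one_iff_unique]
  refine ⟨⟨fun a b => Subtype.ext (Subsingleton.elim _ _)⟩, ⟨⟨1, ?_⟩⟩⟩
  rw [memA_iff]
  constructor <;> intros <;> omega

end AR

/-- `a_1 = 1` and, for `n ≥ 2`, `a_n = ∑_{i=2}^{n} s_i · a_{n−i+1}`. -/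
theorem aCard_recursion :
    aCard 1 = 1 ∧ ∀ n : ℕ, 2 ≤ n →
      aCard n = ∑ i ∈ Finset.Icc 2 n, sCard i * aCard (n - i + 1) := by
  exact ⟨AR.one, AR.main⟩
end

section
/- With s_k the number of simple permutations in A_k, for n ≥ 2, a_n = ∑ over compositions (x_1,…,x_k) of n−1 of the product s_{x_1+1} s_{x_2+1} ⋯ s_{x_k+1}. -/
/-- Cyclic extension (by the value `n` at both ends) of a permutation in `A_n`. -/
structure GoodF (n : ℕ) (g : ℕ → ℕ) : Prop where
  zero : g 0 = n
  big : ∀ x, n < x → g x = n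
  lt : ∀ x, 1 ≤ x → x ≤ n → g x < n
  inj : ∀ x y, 1 ≤ x → x ≤ n → 1 ≤ y → y ≤ n → g x = g y → x = y
  asc : ∀ i j, ¬ (g i < g j ∧ g j < g (j+1) ∧ g (j+1) < g (i+1))
  desc : ∀ i j, ¬ (g (i+1) < g (j+1) ∧ g (j+1) < g j ∧ g j < g i)

/-- The values `0, …, j-1` occupy the positions `p, …, p+j-1`. -/
def Blk (n : ℕ) (g : ℕ → ℕ) (j p : ℕ) : Prop :=
  1 ≤ p ∧ p + j ≤ n + 1 ∧ ∀ x, p ≤ x → x < p + j → g x < j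

/-- No nontrivial initial block. -/
def SimpF (n : ℕ) (g : ℕ → ℕ) : Prop := ∀ j p, 2 ≤ j → j < n → ¬ Blk n g j p

theorem GoodF.surj {n : ℕ} {g : ℕ → ℕ} (h : GoodF n g) (v : ℕ) (hv : v < n) :
    ∃ x, 1 ≤ x ∧ x ≤ n ∧ g x = v := by
  have key : Finset.image g (Finset.Icc 1 n) = Finset.range n := by
    apply Finset.eq_of_subset_of_card_le
    · intro y hy
      simp only [Finset.mem_image, Finset.mem_Icc, Finset.mem_range] at hy ⊢
      obtain ⟨x, ⟨h1, h2⟩, rfl⟩ := hy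
      exact h.lt x h1 h2
    · rw [Finset.card_image_of_injOn]
      · simp
      · intro x hx y hy hxy
        simp only [Finset.coe_Icc, Set.mem_Icc] at hx hy
        exact h.inj x y hx.1 hx.2 hy.1 hy.2 hxy
  have : v ∈ Finset.image g (Finset.Icc 1 n) := by rw [key]; simpa using hv
  simp only [Finset.mem_image, Finset.mem_Icc] at this
  obtain ⟨x, ⟨h1, h2⟩, h3⟩ := this
  exact ⟨x, h1, h2, h3⟩

/-- A window of `m` positions whose values lie in a value window of size `m` covers it. -/
theorem GoodF.window {n : ℕ} {g : ℕ → ℕ} (h : GoodF n g) (p m v : ℕ) (hp : 1 ≤ p)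
    (hpm : p + m ≤ n + 1) (hw : ∀ x, p ≤ x → x < p + m → v ≤ g x ∧ g x < v + m)
    (z : ℕ) (hz1 : v ≤ g z) (hz2 : g z < v + m) (hz3 : g z < n) : p ≤ z ∧ z < p + m := by
  have key : Finset.image g (Finset.Ico p (p+m)) = Finset.Ico v (v+m) := by
    apply Finset.eq_of_subset_of_card_le
    · intro y hy
      simp only [Finset.mem_image, Finset.mem_Ico] at hy ⊢
      obtain ⟨x, ⟨h1, h2⟩, rfl⟩ := hy
      exact hw x h1 h2
    · rw [Finset.card_image_of_injOn]
      · simp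
      · intro x hx y hy hxy
        simp only [Finset.coe_Ico, Set.mem_Ico] at hx hy
        exact h.inj x y (by omega) (by omega) (by omega) (by omega) hxy
  have : g z ∈ Finset.image g (Finset.Ico p (p+m)) := by
    rw [key]; simp; omega
  simp only [Finset.mem_image, Finset.mem_Ico] at this
  obtain ⟨x, ⟨h1, h2⟩, h3⟩ := this
  have hz0 : 1 ≤ z := by
    rcases Nat.eq_zero_or_pos z with rfl | h0
    · have := h.zero; omega
    · exact h0
  have hzn : z ≤ n := by
    by_contra hc
    have := h.big z (by omega); omega
  have := h.inj x z (by omega) (by omega) hz0 hzn h3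
  omega

theorem GoodF.blk_out {n : ℕ} {g : ℕ → ℕ} (h : GoodF n g) {j p : ℕ} (hj : j ≤ n)
    (hb : Blk n g j p) (z : ℕ) (hz : g z < j) : p ≤ z ∧ z < p + j :=
  h.window p j 0 hb.1 hb.2.1 (fun x h1 h2 => by have := hb.2.2 x h1 h2; omega) z
    (by omega) (by omega) (by omega)

/-- Discrete crossing. -/
theorem crossing (P : ℕ → Prop) (a b : ℕ) (hab : a ≤ b) (ha : P a) (hb : ¬ P b) :
    ∃ i, a ≤ i ∧ i < b ∧ P i ∧ ¬ P (i+1) := by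
  by_contra hc
  push Not at hc
  have : ∀ k, a + k ≤ b → P (a + k) := by
    intro k
    induction k with
    | zero => intro _; exact ha
    | succ k ih => intro hk; exact hc (a+k) (by omega) (by omega) (ih (by omega))
  exact hb (by have := this (b - a) (by omega); rwa [Nat.add_sub_cancel' hab] at this)

/-- reversal -/
theorem GoodF.rev {n : ℕ} {g : ℕ → ℕ} (h : GoodF n g) : GoodF n (fun x => g (n + 1 - x)) where
  zero := h.big _ (by omega)
  big x hx := by
    have : n + 1 - x = 0 := by omega
    simp only [this]; exact h.zero
  lt x h1 h2 := h.lt _ (by omega) (by omega)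
  inj x y h1 h2 h3 h4 h5 := by
    have := h.inj _ _ (by omega) (by omega) (by omega) (by omega) h5
    omega
  asc i j := by
    rintro ⟨h1, h2, h3⟩
    by_cases hi : n < i
    · have e1 : n + 1 - i = 0 := by omega
      have e2 : n + 1 - (i + 1) = 0 := by omega
      simp only [e1, e2] at h1 h2 h3; omega
    by_cases hj : n < j
    · have e1 : n + 1 - j = 0 := by omega
      have e2 : n + 1 - (j + 1) = 0 := by omega
      simp only [e1, e2] at h1 h2 h3; omega
    have e1 : n + 1 - i = (n - i) + 1 := by omega
    have e2 : n + 1 - (i + 1) = n - i := by omega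
    have e3 : n + 1 - j = (n - j) + 1 := by omega
    have e4 : n + 1 - (j + 1) = n - j := by omega
    simp only [e1, e2, e3, e4] at h1 h2 h3
    exact h.desc (n - i) (n - j) ⟨h1, h2, h3⟩
  desc i j := by
    rintro ⟨h1, h2, h3⟩
    by_cases hi : n < i
    · have e1 : n + 1 - i = 0 := by omega
      have e2 : n + 1 - (i + 1) = 0 := by omega
      simp only [e1, e2] at h1 h2 h3; omega
    by_cases hj : n < j
    · have e1 : n + 1 - j = 0 := by omega
      have e2 : n + 1 - (j + 1) = 0 := by omega
      simp only [e1, e2] at h1 h2 h3; omega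
    have e1 : n + 1 - i = (n - i) + 1 := by omega
    have e2 : n + 1 - (i + 1) = n - i := by omega
    have e3 : n + 1 - j = (n - j) + 1 := by omega
    have e4 : n + 1 - (j + 1) = n - j := by omega
    simp only [e1, e2, e3, e4] at h1 h2 h3
    exact h.asc (n - i) (n - j) ⟨h1, h2, h3⟩

theorem blk_rev {n : ℕ} {g : ℕ → ℕ} {j p : ℕ}
    (hb : Blk n (fun x => g (n + 1 - x)) j p) : Blk n g j (n + 2 - p - j) := by
  obtain ⟨h1, h2, h3⟩ := hb
  refine ⟨by omega, by omega, fun x hx1 hx2 => ?_⟩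
  have := h3 (n + 1 - x) (by omega) (by omega)
  have e : n + 1 - (n + 1 - x) = x := by omega
  simpa only [e] using this

/-- A block entered from below forces an initial block. -/
theorem GoodF.blk_of_below {n : ℕ} {g : ℕ → ℕ} (h : GoodF n g) (l m v : ℕ) (hl : 1 ≤ l)
    (hm : 2 ≤ m) (hlm : l + m ≤ n + 1)
    (hw : ∀ x, l ≤ x → x < l + m → v ≤ g x ∧ g x < v + m)
    (hx : g (l-1) < v) : ∃ j p, 2 ≤ j ∧ j < n ∧ Blk n g j p := by
  have hwin := h.window l m v hl hlm hw
  have hl1 : l ≠ 1 := by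
    rintro rfl
    have h0 := h.zero
    have := h.lt 1 (by omega) (by omega)
    have := (hw 1 (by omega) (by omega))
    simp at hx
    omega
  have hvn : v + m ≤ n := by
    by_contra hc
    have hsub : Finset.image g (Finset.Ico l (l+m)) ⊆ Finset.Ico v n := by
      intro y hy
      simp only [Finset.mem_image, Finset.mem_Ico] at hy ⊢
      obtain ⟨x, ⟨h1, h2⟩, rfl⟩ := hy
      exact ⟨(hw x h1 h2).1, h.lt x (by omega) (by omega)⟩
    have := Finset.card_le_card hsub
    rw [Finset.card_image_of_injOn] at this
    · simp at this; omega
    · intro x hx y hy hxy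
      simp only [Finset.coe_Ico, Set.mem_Ico] at hx hy
      exact h.inj x y (by omega) (by omega) (by omega) (by omega) hxy
  -- a descent over the block
  obtain ⟨d, hd1, hd2, hd3, hd4⟩ := crossing (fun i => v ≤ g i) 0 (l-1) (by omega)
    (by have := h.zero; omega) (by omega)
  have hd5 : v + m ≤ g d := by
    by_contra hc
    have := hwin d hd3 (by omega) (by omega)
    omega
  simp only [not_le] at hd4
  have hinc : ∀ x, l ≤ x → x + 1 < l + m → g x < g (x+1) := by
    intro x h1 h2
    have a1 := hw x h1 (by omega)
    have a2 := hw (x+1) (by omega) h2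
    by_contra hc
    have hne : g x ≠ g (x+1) := fun he => by
      have := h.inj x (x+1) (by omega) (by omega) (by omega) (by omega) he
      omega
    exact h.desc d x ⟨by omega, by omega, by omega⟩
  have hup : ∀ k, k < m → g l + k ≤ g (l + k) := by
    intro k
    induction k with
    | zero => intro _; simp
    | succ k ih =>
      intro hk
      have := ih (by omega)
      have := hinc (l+k) (by omega) (by omega)
      have e : l + (k + 1) = l + k + 1 := by omega
      rw [e]; omega
  have hup2 : ∀ k, k + 1 < m → g (l+1) + k ≤ g (l + 1 + k) := by
    intro k
    induction k with
    | zero => intro _; simp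
    | succ k ih =>
      intro hk
      have := ih (by omega)
      have := hinc (l+1+k) (by omega) (by omega)
      have e : l + 1 + (k + 1) = l + 1 + k + 1 := by omega
      rw [e]; omega
  have gl : g l = v := by
    have := hup (m-1) (by omega)
    have := hw (l + (m-1)) (by omega) (by omega)
    have := hw l (by omega) (by omega)
    omega
  have gl1 : g (l+1) = v + 1 := by
    have := hup2 (m-2) (by omega)
    have := hw (l + 1 + (m-2)) (by omega) (by omega)
    have := hinc l (by omega) (by omega)
    omega
  -- upward crossings
  have hcr : ∀ i, g i < v → v ≤ g (i+1) → i + 1 = l := by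
    intro i h1 h2
    have hi0 : 1 ≤ i := by
      rcases Nat.eq_zero_or_pos i with rfl | h0
      · have := h.zero; omega
      · exact h0
    by_contra hne
    have hil : i ≠ l := by rintro rfl; omega
    have n1 : g (i+1) ≠ v := by
      intro he
      have := hwin (i+1) h2 (by omega) (by omega)
      have := h.inj (i+1) l (by omega) (by omega) (by omega) (by omega) (by omega)
      omega
    have n2 : g (i+1) ≠ v + 1 := by
      intro he
      have := hwin (i+1) h2 (by omega) (by omega)
      have := h.inj (i+1) (l+1) (by omega) (by omega) (by omega) (by omega) (by omega)
      omega
    exact h.asc i l ⟨by omega, by omega, by omega⟩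
  have hlow : ∀ z, g z < v → z < l ∧ ∀ y, z ≤ y → y < l → g y < v := by
    intro z hz
    have hzl : z < l := by
      by_contra hc
      have hzn : z ≤ n := by
        by_contra hc
        have := h.big z (by omega); omega
      obtain ⟨i, hi1, hi2, hi3, hi4⟩ := crossing (fun i => g i < v) z (n+1) (by omega) hz
        (by have := h.big (n+1) (by omega); omega)
      have := hcr i hi3 (by simpa using hi4)
      omega
    refine ⟨hzl, fun y h1 h2 => ?_⟩
    by_contra hc
    obtain ⟨i, hi1, hi2, hi3, hi4⟩ := crossing (fun i => g i < v) z y h1 hz hc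
    have := hcr i hi3 (by simpa using hi4)
    omega
  have hcount : ∀ z, z < l → l ≤ z + v → g z < v := by
    intro z hz1 hz2
    by_contra hc
    have hsub : Finset.range v ⊆ Finset.image g (Finset.Ioo z l) := by
      intro y hy
      simp only [Finset.mem_range, Finset.mem_image, Finset.mem_Ioo] at hy ⊢
      obtain ⟨x, x1, x2, x3⟩ := h.surj y (by omega)
      have := hlow x (by omega)
      refine ⟨x, ⟨?_, this.1⟩, x3⟩
      by_contra hxz
      exact hc (this.2 z (by omega) hz1)
    have c1 := Finset.card_le_card hsub
    have c2 := Finset.card_image_le (s := Finset.Ioo z l) (f := g)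
    simp at c1 c2
    omega
  have hvl : v < l := by
    by_contra hc
    have := hcount 0 (by omega) (by omega)
    have := h.zero
    omega
  by_cases hv : 2 ≤ v
  · refine ⟨v, l - v, hv, by omega, by omega, by omega, fun x h1 h2 => hcount x (by omega) (by omega)⟩
  · refine ⟨2, l - 1, le_refl _, by omega, by omega, by omega, fun x h1 h2 => ?_⟩
    have : x = l - 1 ∨ x = l := by omega
    rcases this with rfl | rfl <;> omega

/-- Any nontrivial block forces an initial one. -/
theorem GoodF.blk_of_block {n : ℕ} {g : ℕ → ℕ} (h : GoodF n g) (l m v : ℕ) (hl : 1 ≤ l)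
    (hm : 2 ≤ m) (hmn : m < n) (hlm : l + m ≤ n + 1)
    (hw : ∀ x, l ≤ x → x < l + m → v ≤ g x ∧ g x < v + m) :
    ∃ j p, 2 ≤ j ∧ j < n ∧ Blk n g j p := by
  have hwin := h.window l m v hl hlm hw
  rcases Nat.eq_zero_or_pos v with rfl | hv
  · exact ⟨m, l, hm, hmn, hl, hlm, fun x h1 h2 => by have := hw x h1 h2; omega⟩
  by_cases hx : g (l-1) < v
  · exact h.blk_of_below l m v hl hm hlm hw hx
  by_cases hy : g (l+m) < v
  · have hr := h.rev
    obtain ⟨j, p, h1, h2, h3⟩ := hr.blk_of_below (n + 2 - l - m) m v (by omega) hm (by omega)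
      (fun x h1 h2 => hw _ (by omega) (by omega)) (by
        have hle : l + m ≠ n + 1 := by
          intro he
          have := h.big (l+m) (by omega)
          have := h.lt l (by omega) (by omega)
          have := hw l (by omega) (by omega)
          omega
        have e : n + 1 - (n + 2 - l - m - 1) = l + m := by omega
        simp only [e]; exact hy)
    exact ⟨j, _, h1, h2, blk_rev h3⟩
  exfalso
  have hln : g l < n := h.lt l (by omega) (by omega)
  have hwl := hw l (by omega) (by omega)
  obtain ⟨z, z1, z2, z3⟩ := h.surj 0 (by omega)
  have hz : z < l ∨ l + m ≤ z := by
    by_contra hc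
    have := hw z (by omega) (by omega)
    omega
  have hout : ∀ y, (y < l ∨ l + m ≤ y) → v ≤ g y → g y < n → v + m ≤ g y := by
    intro y h1 h2 h3
    by_contra hc
    have := hwin y h2 (by omega) h3
    omega
  have hlt1 := h.lt (l+1) (by omega) (by omega)
  have a1 := hw (l+1) (by omega) (by omega)
  have hne : g l ≠ g (l+1) := fun he => by
    have := h.inj l (l+1) (by omega) (by omega) (by omega) (by omega) he
    omega
  have fin : ∀ a b, (∀ x, a ≤ x → x ≤ b → x < l ∨ l + m ≤ x) → v ≤ g a → v ≤ g b → 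
      a ≤ z → z ≤ b → False := by
    intro a b hab ha hb haz hzb
    obtain ⟨d, hd1, hd2, hd3, hd4⟩ := crossing (fun i => v ≤ g i) a z haz ha (by omega)
    obtain ⟨u, hu1, hu2, hu3, hu4⟩ := crossing (fun i => ¬ v ≤ g i) z b hzb (by omega)
      (by omega)
    simp only [not_le, not_lt] at hd4 hu3 hu4
    have q1 := hout d (hab d (by omega) (by omega)) hd3
    have q2 := hout (u+1) (hab (u+1) (by omega) (by omega)) hu4
    by_cases hlt : g l < g (l+1)
    · exact h.asc u l ⟨by omega, by omega, by omega⟩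
    · exact h.desc d l ⟨by omega, by omega, by omega⟩
  rcases hz with hz | hz
  · exact fin 0 (l-1) (fun x h1 h2 => by omega) (by have := h.zero; omega) (by omega) (by omega)
      (by omega)
  · exact fin (l+m) (n+1) (fun x h1 h2 => by omega) (by omega)
      (by have := h.big (n+1) (by omega); omega) (by omega) (by omega)

/-- Inflation of the entry `0` (at position `p`) of `σ` by `α`. -/
def infl (j p : ℕ) (σ α : ℕ → ℕ) (x : ℕ) : ℕ :=
  if x < p then σ x + (j - 1) else if x < p + j then α (x + 1 - p) else σ (x + 1 - j) + (j - 1)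

theorem infl_left {j p : ℕ} {σ α : ℕ → ℕ} {x : ℕ} (h : x < p) :
    infl j p σ α x = σ x + (j - 1) := by simp [infl, h]

theorem infl_mid {j p : ℕ} {σ α : ℕ → ℕ} {x : ℕ} (h : p ≤ x) (h2 : x < p + j) :
    infl j p σ α x = α (x + 1 - p) := by simp [infl, h2, not_lt.mpr h]

theorem infl_right {j p : ℕ} {σ α : ℕ → ℕ} {x : ℕ} (h : p + j ≤ x) :
    infl j p σ α x = σ (x + 1 - j) + (j - 1) := by
  have h1 : ¬ x < p := by omega
  have h2 : ¬ x < p + j := by omega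
  simp [infl, h1, h2]

theorem GoodF.pos_of_ne {i : ℕ} {σ : ℕ → ℕ} (h : GoodF i σ) {p : ℕ} (hp1 : 1 ≤ p) (hp2 : p ≤ i)
    (hp : σ p = 0) (x : ℕ) (hx : x ≠ p) : 0 < σ x := by
  by_contra hc
  have h0 : 1 ≤ x := by
    rcases Nat.eq_zero_or_pos x with rfl | h0
    · have := h.zero; omega
    · exact h0
  have hn : x ≤ i := by
    by_contra hcc
    have := h.big x (by omega); omega
  exact hx (h.inj x p h0 hn hp1 hp2 (by omega))

theorem infl_lt_iff {i j p : ℕ} {σ α : ℕ → ℕ} (hσ : GoodF i σ) (hα : GoodF j α) (hj : 1 ≤ j)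
    (hp1 : 1 ≤ p) (hp2 : p ≤ i) (hp : σ p = 0) (x : ℕ) :
    infl j p σ α x < j ↔ (p ≤ x ∧ x < p + j) := by
  rcases lt_or_ge x p with h | h
  · rw [infl_left h]
    have := hσ.pos_of_ne hp1 hp2 hp x (by omega)
    omega
  rcases lt_or_ge x (p + j) with h2 | h2
  · rw [infl_mid h h2]
    have := hα.lt (x + 1 - p) (by omega) (by omega)
    omega
  · rw [infl_right h2]
    have := hσ.pos_of_ne hp1 hp2 hp (x + 1 - j) (by omega)
    omega

theorem infl_arc {i j p : ℕ} {σ α : ℕ → ℕ} (hσ : GoodF i σ) (hα : GoodF j α) (hj : 1 ≤ j)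
    (hp1 : 1 ≤ p) (hp2 : p ≤ i) (hp : σ p = 0) (x : ℕ) :
    (∃ a, min (infl j p σ α x) j = α a ∧ min (infl j p σ α (x+1)) j = α (a+1)) ∧
    ((infl j p σ α x < j ∧ infl j p σ α (x+1) < j) ∨
      (∃ s, infl j p σ α x - (j-1) = σ s ∧ infl j p σ α (x+1) - (j-1) = σ (s+1)) ∧
      (infl j p σ α x < j → x + 1 = p + j) ∧ (infl j p σ α (x+1) < j → x + 1 = p)) := by
  have hlt := infl_lt_iff hσ hα hj hp1 hp2 hp
  have b1 := hlt x
  have b2 := hlt (x+1)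
  have hb := hα.big
  rcases lt_or_ge (x + 1) p with h | h
  · refine ⟨⟨j+1, ?_, ?_⟩, Or.inr ⟨⟨x, ?_, ?_⟩, by omega, by omega⟩⟩
    · rw [hb (j+1) (by omega)]; omega
    · rw [hb (j+1+1) (by omega)]; omega
    · rw [infl_left (by omega)]; omega
    · rw [infl_left (by omega)]; omega
  rcases eq_or_lt_of_le h with h | h
  · refine ⟨⟨0, ?_, ?_⟩, Or.inr ⟨⟨x, ?_, ?_⟩, by omega, by omega⟩⟩
    · rw [hα.zero]; omega
    · rw [min_eq_left (by omega), infl_mid (by omega) (by omega)]; congr 1; omega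
    · rw [infl_left (by omega)]; omega
    · have hp' : σ (x+1) = 0 := h ▸ hp
      rw [hp']; omega
  rcases lt_or_ge (x+1) (p + j) with h2 | h2
  · refine ⟨⟨x + 1 - p, ?_, ?_⟩, Or.inl (by omega)⟩
    · rw [min_eq_left (by omega), infl_mid (by omega) (by omega)]
    · rw [min_eq_left (by omega), infl_mid (by omega) (by omega)]; congr 1; omega
  rcases eq_or_lt_of_le h2 with h2 | h2
  · refine ⟨⟨j, ?_, ?_⟩, Or.inr ⟨⟨p, ?_, ?_⟩, by omega, by omega⟩⟩
    · rw [min_eq_left (by omega), infl_mid (by omega) (by omega)]; congr 1; omega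
    · rw [hb (j+1) (by omega)]; omega
    · rw [hp]; omega
    · rw [infl_right (by omega)]
      have e : x + 1 + 1 - j = p + 1 := by omega
      rw [e]; omega
  · refine ⟨⟨j+1, ?_, ?_⟩, Or.inr ⟨⟨x + 1 - j, ?_, ?_⟩, by omega, by omega⟩⟩
    · rw [hb (j+1) (by omega)]; omega
    · rw [hb (j+1+1) (by omega)]; omega
    · rw [infl_right (by omega)]; omega
    · rw [infl_right (by omega)]
      have e : x + 1 + 1 - j = x + 1 - j + 1 := by omega
      rw [e]; omega

theorem infl_good {i j p n : ℕ} {σ α : ℕ → ℕ} (hσ : GoodF i σ) (hα : GoodF j α) (hj : 1 ≤ j)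
    (hp1 : 1 ≤ p) (hp2 : p ≤ i) (hp : σ p = 0) (hn : n + 1 = i + j) :
    GoodF n (infl j p σ α) := by
  have harc := infl_arc hσ hα hj hp1 hp2 hp
  have hlt := infl_lt_iff hσ hα hj hp1 hp2 hp
  refine ⟨?_, ?_, ?_, ?_, ?_, ?_⟩
  · rw [infl_left (by omega), hσ.zero]; omega
  · intro x hx
    rw [infl_right (by omega), hσ.big _ (by omega)]; omega
  · intro x h1 h2
    rcases lt_or_ge x p with h | h
    · rw [infl_left h]
      have := hσ.lt x h1 (by omega); omega
    rcases lt_or_ge x (p + j) with h' | h'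
    · have := (hlt x).2 ⟨h, h'⟩; omega
    · rw [infl_right h']
      have := hσ.lt (x + 1 - j) (by omega) (by omega); omega
  · intro x y hx1 hx2 hy1 hy2 hxy
    have l1 := hlt x
    have l2 := hlt y
    rcases lt_or_ge x p with h | h
    · rcases lt_or_ge y p with k | k
      · rw [infl_left h, infl_left k] at hxy
        exact hσ.inj x y (by omega) (by omega) (by omega) (by omega) (by omega)
      rcases lt_or_ge y (p + j) with k' | k'
      · omega
      · rw [infl_left h, infl_right k'] at hxy
        have := hσ.inj x (y + 1 - j) (by omega) (by omega) (by omega) (by omega) (by omega)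
        omega
    rcases lt_or_ge x (p + j) with h' | h'
    · have hy : p ≤ y ∧ y < p + j := by omega
      rw [infl_mid h h', infl_mid hy.1 hy.2] at hxy
      have := hα.inj _ _ (by omega) (by omega) (by omega) (by omega) hxy
      omega
    · rcases lt_or_ge y p with k | k
      · rw [infl_right h', infl_left k] at hxy
        have := hσ.inj (x + 1 - j) y (by omega) (by omega) (by omega) (by omega) (by omega)
        omega
      rcases lt_or_ge y (p + j) with k' | k'
      · omega
      · rw [infl_right h', infl_right k'] at hxy
        have := hσ.inj (x + 1 - j) (y + 1 - j) (by omega) (by omega) (by omega) (by omega)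
          (by omega)
        omega
  · rintro x y ⟨h1, h2, h3⟩
    obtain ⟨⟨a, a1, a2⟩, hx⟩ := harc x
    obtain ⟨⟨b, b1, b2⟩, hy⟩ := harc y
    have c1 := hα.asc a b
    rw [← a1, ← a2, ← b1, ← b2] at c1
    have hxy : x ≠ y := by rintro rfl; omega
    rcases hx with hx | ⟨⟨s, s1, s2⟩, hx1, hx2⟩
    · clear hy; omega
    rcases hy with hy | ⟨⟨t, t1, t2⟩, hy1, hy2⟩
    · omega
    have c2 := hσ.asc s t
    rw [← s1, ← s2, ← t1, ← t2] at c2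
    omega
  · rintro x y ⟨h1, h2, h3⟩
    obtain ⟨⟨a, a1, a2⟩, hx⟩ := harc x
    obtain ⟨⟨b, b1, b2⟩, hy⟩ := harc y
    have c1 := hα.desc a b
    rw [← a1, ← a2, ← b1, ← b2] at c1
    have hxy : x ≠ y := by rintro rfl; omega
    rcases hx with hx | ⟨⟨s, s1, s2⟩, hx1, hx2⟩
    · clear hy; omega
    rcases hy with hy | ⟨⟨t, t1, t2⟩, hy1, hy2⟩
    · omega
    have c2 := hσ.desc s t
    rw [← s1, ← s2, ← t1, ← t2] at c2
    omega

/-- The innr part of a permutation with an initial block. -/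
def innr (j p : ℕ) (g : ℕ → ℕ) (x : ℕ) : ℕ := if x = 0 ∨ j < x then j else g (x + p - 1)

/-- The quotient of a permutation by an initial block. -/
def outer (j p : ℕ) (g : ℕ → ℕ) (x : ℕ) : ℕ :=
  if x ≤ p then g x - (j - 1) else g (x + j - 1) - (j - 1)

theorem inner_good {n j p : ℕ} {g : ℕ → ℕ} (h : GoodF n g) (hj : 1 ≤ j) (hjn : j < n)
    (hb : Blk n g j p) : GoodF j (innr j p g) := by
  have hout := h.blk_out hjn.le hb
  obtain ⟨hp1, hp2, hb⟩ := hb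
  have hm : ∀ x, 1 ≤ x → x ≤ j → innr j p g x = g (x + p - 1) := by
    intro x h1 h2
    have : ¬ (x = 0 ∨ j < x) := by omega
    simp [innr, this]
  have hmin : ∀ x, x ≤ j + 1 → innr j p g x = min (g (x + p - 1)) j := by
    intro x hx
    by_cases hc : x = 0 ∨ j < x
    · simp only [innr, hc, if_true]
      have : ¬ g (x + p - 1) < j := fun hlt => by
        have := hout _ hlt
        omega
      omega
    · rw [hm x (by omega) (by omega)]
      have := hb (x + p - 1) (by omega) (by omega)
      omega
  have hbig : ∀ x, j < x → innr j p g x = j := by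
    intro x hx; simp [innr, hx]
  have e : ∀ x, x + 1 + p - 1 = (x + p - 1) + 1 := by intro x; omega
  refine ⟨by simp [innr], hbig, ?_, ?_, ?_, ?_⟩
  · intro x h1 h2
    rw [hm x h1 h2]; exact hb _ (by omega) (by omega)
  · intro x y h1 h2 h3 h4 h5
    rw [hm x h1 h2, hm y h3 h4] at h5
    have := h.inj _ _ (by omega) (by omega) (by omega) (by omega) h5
    omega
  · rintro x y ⟨h1, h2, h3⟩
    have hx : x ≤ j := by
      by_contra hc
      rw [hbig x (by omega)] at h1; rw [hbig (x+1) (by omega)] at h3; omega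
    have hy : y ≤ j := by
      by_contra hc
      rw [hbig y (by omega), hbig (y+1) (by omega)] at h2; omega
    rw [hmin x (by omega), hmin y (by omega)] at h1
    rw [hmin (y+1) (by omega), hmin y (by omega), e] at h2
    rw [hmin (x+1) (by omega), hmin (y+1) (by omega), e, e] at h3
    exact h.asc (x + p - 1) (y + p - 1) (by omega)
  · rintro x y ⟨h1, h2, h3⟩
    have hx : x ≤ j := by
      by_contra hc
      rw [hbig x (by omega)] at h3; rw [hbig (x+1) (by omega)] at h1; omega
    have hy : y ≤ j := by
      by_contra hc
      rw [hbig y (by omega), hbig (y+1) (by omega)] at h2; omega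
    rw [hmin x (by omega), hmin y (by omega)] at h3
    rw [hmin (y+1) (by omega), hmin y (by omega), e] at h2
    rw [hmin (x+1) (by omega), hmin (y+1) (by omega), e, e] at h1
    exact h.desc (x + p - 1) (y + p - 1) (by omega)

theorem outer_zero {n j p : ℕ} {g : ℕ → ℕ} (hj : 1 ≤ j) (hb : Blk n g j p) :
    outer j p g p = 0 := by
  have := hb.2.2 p (le_refl _) (by omega)
  simp only [outer, le_refl, if_true]; omega

theorem outer_good {n i j p : ℕ} {g : ℕ → ℕ} (h : GoodF n g) (hj : 1 ≤ j) (hjn : j < n)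
    (hb : Blk n g j p) (hi : i + j = n + 1) : GoodF i (outer j p g) := by
  have hout := h.blk_out hjn.le hb
  have hz := outer_zero hj hb
  obtain ⟨hp1, hp2, hb⟩ := hb
  have hl : ∀ x, x ≤ p → outer j p g x = g x - (j - 1) := by
    intro x hx; simp [outer, hx]
  have hr : ∀ x, p < x → outer j p g x = g (x + j - 1) - (j - 1) := by
    intro x hx; simp [outer, not_le.mpr hx]
  have harc : ∀ x, ∃ k, outer j p g x = g k - (j-1) ∧ outer j p g (x+1) = g (k+1) - (j-1) := by
    intro x
    rcases lt_trichotomy x p with hx | hx | hx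
    · exact ⟨x, hl x (by omega), hl _ (by omega)⟩
    · refine ⟨p + j - 1, ?_, ?_⟩
      · rw [hx, hz]
        have := hb (p + j - 1) (by omega) (by omega)
        omega
      · rw [hr _ (by omega)]; congr 2; omega
    · refine ⟨x + j - 1, hr x hx, ?_⟩
      rw [hr _ (by omega)]; congr 2; omega
  have hge : ∀ x, x < p ∨ p + j ≤ x → j ≤ g x := by
    intro x hx
    by_contra hc
    have := hout x (by omega); omega
  refine ⟨?_, ?_, ?_, ?_, ?_, ?_⟩
  · rw [hl 0 (by omega), h.zero]; omega
  · intro x hx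
    rw [hr x (by omega), h.big _ (by omega)]; omega
  · intro x h1 h2
    rcases lt_or_ge p x with hx | hx
    · rw [hr x hx]
      have := h.lt (x + j - 1) (by omega) (by omega)
      omega
    · rw [hl x hx]
      have := h.lt x (by omega) (by omega)
      omega
  · have hpos : ∀ x, x ≠ p → 1 ≤ outer j p g x := by
      intro x hx
      rcases lt_or_gt_of_ne hx with hx | hx
      · rw [hl x hx.le]; have := hge x (by omega); omega
      · rw [hr x hx]; have := hge (x + j - 1) (by omega); omega
    have hidx : ∀ x, x ≠ p → 1 ≤ x → x ≤ i → ∃ k, outer j p g x = g k - (j-1) ∧ j ≤ g k ∧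
        1 ≤ k ∧ k ≤ n ∧ (k < p ∧ x = k ∨ p + j ≤ k ∧ x + j = k + 1) := by
      intro x hx h1 h2
      rcases lt_or_gt_of_ne hx with hx | hx
      · exact ⟨x, hl x hx.le, hge x (by omega), by omega, by omega, by omega⟩
      · exact ⟨x + j - 1, hr x hx, hge _ (by omega), by omega, by omega, by omega⟩
    intro x y h1 h2 h3 h4 h5
    by_cases hx : x = p
    · by_contra hne
      have := hpos y (by omega)
      rw [hx, hz] at h5; omega
    by_cases hy : y = p
    · by_contra hne
      have := hpos x (by omega)
      rw [hy, hz] at h5; omega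
    obtain ⟨k, k1, k2, k3, k4, k5⟩ := hidx x hx h1 h2
    obtain ⟨l, l1, l2, l3, l4, l5⟩ := hidx y hy h3 h4
    have := h.inj k l k3 k4 l3 l4 (by omega)
    omega
  · rintro x y ⟨h1, h2, h3⟩
    obtain ⟨k, k1, k2⟩ := harc x
    obtain ⟨l, l1, l2⟩ := harc y
    exact h.asc k l (by omega)
  · rintro x y ⟨h1, h2, h3⟩
    obtain ⟨k, k1, k2⟩ := harc x
    obtain ⟨l, l1, l2⟩ := harc y
    exact h.desc k l (by omega)

theorem infl_outer_inner {n j p : ℕ} {g : ℕ → ℕ} (h : GoodF n g) (hj : 1 ≤ j) (hjn : j < n)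
    (hb : Blk n g j p) : infl j p (outer j p g) (innr j p g) = g := by
  have hout := h.blk_out hjn.le hb
  obtain ⟨hp1, hp2, hb⟩ := hb
  have hge : ∀ x, x < p ∨ p + j ≤ x → j ≤ g x := by
    intro x hx
    by_contra hc
    have := hout x (by omega); omega
  funext x
  rcases lt_or_ge x p with hx | hx
  · rw [infl_left hx]
    have := hge x (by omega)
    simp only [outer, hx.le, if_true]; omega
  rcases lt_or_ge x (p + j) with hx' | hx'
  · rw [infl_mid hx hx']
    have : ¬ (x + 1 - p = 0 ∨ j < x + 1 - p) := by omega
    simp only [innr, this, if_false]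
    congr 1; omega
  · rw [infl_right hx']
    have := hge x (by omega)
    have h1 : ¬ (x + 1 - j ≤ p) := by omega
    have h2 : x + 1 - j + j - 1 = x := by omega
    simp only [outer, h1, if_false, h2]; omega

theorem outer_infl {i j p : ℕ} {σ α : ℕ → ℕ} (hσ : GoodF i σ) (hα : GoodF j α) (hj : 1 ≤ j)
    (hp1 : 1 ≤ p) (hp2 : p ≤ i) (hp : σ p = 0) : outer j p (infl j p σ α) = σ := by
  funext x
  rcases lt_trichotomy x p with hx | hx | hx
  · simp only [outer, hx.le, if_true, infl_left hx]; omega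
  · have := (infl_lt_iff hσ hα hj hp1 hp2 hp p).2 (by omega)
    rw [hx, hp]
    simp only [outer, le_refl, if_true]; omega
  · have e : x + j - 1 + 1 - j = x := by omega
    simp only [outer, not_le.mpr hx, if_false, infl_right (show p + j ≤ x + j - 1 by omega), e]
    omega

theorem inner_infl {j p : ℕ} {σ α : ℕ → ℕ} (hα : GoodF j α) :
    innr j p (infl j p σ α) = α := by
  funext x
  by_cases hc : x = 0 ∨ j < x
  · simp only [innr, hc, if_true]
    rcases hc with rfl | hc
    · rw [hα.zero]
    · rw [hα.big x hc]
  · simp only [innr, hc, if_false]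
    rw [infl_mid (by omega) (by omega)]
    congr 1; omega

/-- Blocks of the inflation larger than the inflated one come from blocks of `σ`. -/
theorem blk_outer {n i j p j' p' : ℕ} {g : ℕ → ℕ} (h : GoodF n g) (hj : 1 ≤ j) (hjj : j < j')
    (hjn : j' < n) (hb : Blk n g j p) (hb' : Blk n g j' p') (hi : i + j = n + 1) :
    Blk i (outer j p g) (j' - j + 1) p' := by
  have hc1 := h.blk_out hjn.le hb' p (by have := hb.2.2 p (by omega) (by omega); omega)
  have hc2 := h.blk_out hjn.le hb' (p + j - 1)
    (by have := hb.2.2 (p + j - 1) (by omega) (by omega); omega)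
  obtain ⟨h1, h2, h3⟩ := hb
  obtain ⟨k1, k2, k3⟩ := hb'
  refine ⟨k1, by omega, fun x hx1 hx2 => ?_⟩
  rcases le_or_gt x p with hx | hx
  · simp only [outer, hx, if_true]
    have := k3 x hx1 (by omega); omega
  · simp only [outer, not_le.mpr hx, if_false]
    have := k3 (x + j - 1) (by omega) (by omega); omega

theorem blk_infl {n i j p j' p' : ℕ} {g : ℕ → ℕ} (h : GoodF n g) (hj : 1 ≤ j) (hjn : j < n)
    (hj' : 2 ≤ j') (hji : j' < i) (hb : Blk n g j p) (hi : i + j = n + 1)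
    (hb' : Blk i (outer j p g) j' p') : Blk n g (j' + j - 1) p' := by
  have hg := outer_good h hj hjn hb hi
  have hc := hg.blk_out hji.le hb' p (by rw [outer_zero hj hb]; omega)
  obtain ⟨h1, h2, h3⟩ := hb
  obtain ⟨k1, k2, k3⟩ := hb'
  refine ⟨k1, by omega, fun x hx1 hx2 => ?_⟩
  rcases lt_or_ge x p with hx | hx
  · have := k3 x hx1 (by omega)
    simp only [outer, hx.le, if_true] at this
    omega
  rcases lt_or_ge x (p + j) with hx' | hx'
  · have := h3 x hx hx'; omega
  · have := k3 (x + 1 - j) (by omega) (by omega)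
    have e1 : ¬ (x + 1 - j ≤ p) := by omega
    have e2 : x + 1 - j + j - 1 = x := by omega
    simp only [outer, e1, if_false, e2] at this
    omega

theorem GoodF.exists_zero {i : ℕ} {σ : ℕ → ℕ} (h : GoodF i σ) (hi : 1 ≤ i) :
    ∃ p, 1 ≤ p ∧ p ≤ i ∧ σ p = 0 := h.surj 0 (by omega)

/-- The set of good functions. -/
abbrev AF (n : ℕ) := {g : ℕ → ℕ // GoodF n g}
/-- The set of simple good functions. -/
abbrev SF (n : ℕ) := {g : ℕ → ℕ // GoodF n g ∧ SimpF n g}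

open Classical in
/-- The position of zero. -/
noncomputable def zpos (σ : ℕ → ℕ) : ℕ := if h : ∃ p, σ p = 0 then Nat.find h else 0

theorem GoodF.zpos_spec {i : ℕ} {σ : ℕ → ℕ} (h : GoodF i σ) (hi : 1 ≤ i) :
    1 ≤ zpos σ ∧ zpos σ ≤ i ∧ σ (zpos σ) = 0 := by
  classical
  obtain ⟨p, h1, h2, h3⟩ := h.exists_zero hi
  have hex : ∃ p, σ p = 0 := ⟨p, h3⟩
  have hs : σ (zpos σ) = 0 := by
    rw [zpos, dif_pos hex]; exact Nat.find_spec hex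
  have : zpos σ = p := by
    by_contra hc
    have := h.pos_of_ne h1 h2 h3 _ hc
    omega
  omega

theorem infl_blk {i j p n : ℕ} {σ α : ℕ → ℕ} (hσ : GoodF i σ) (hα : GoodF j α) (hj : 1 ≤ j)
    (hp1 : 1 ≤ p) (hp2 : p ≤ i) (hp : σ p = 0) (hn : n + 1 = i + j) :
    Blk n (infl j p σ α) j p :=
  ⟨hp1, by omega, fun x h1 h2 => (infl_lt_iff hσ hα hj hp1 hp2 hp x).2 ⟨h1, h2⟩⟩

/-- The decomposition map. -/
noncomputable def decMap (n : ℕ) (t : Σ j : Fin (n - 1), SF (n - j) × AF (j + 1)) : AF n :=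
  ⟨infl (t.1 + 1) (zpos t.2.1.1) t.2.1.1 t.2.2.1, by
    have hj := t.1.2
    obtain ⟨h1, h2, h3⟩ := t.2.1.2.1.zpos_spec (by omega)
    exact infl_good t.2.1.2.1 t.2.2.2 (by omega) h1 h2 h3 (by omega)⟩

theorem decMap_bij (n : ℕ) (hn : 2 ≤ n) : Function.Bijective (decMap n) := by
  constructor
  · rintro ⟨⟨j, hj⟩, ⟨σ, hσ, hσs⟩, ⟨α, hα⟩⟩ ⟨⟨k, hk⟩, ⟨τ, hτ, hτs⟩, ⟨β, hβ⟩⟩ he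
    simp only [decMap, Subtype.mk.injEq] at he
    simp only at hσ hτ hα hβ hσs hτs
    obtain ⟨p1, p2, p3⟩ := hσ.zpos_spec (by omega)
    obtain ⟨q1, q2, q3⟩ := hτ.zpos_spec (by omega)
    generalize zpos σ = p at *
    generalize zpos τ = q at *
    have g1 := infl_good (n := n) hσ hα (by omega) p1 p2 p3 (by omega)
    have b1 := infl_blk (n := n) hσ hα (by omega) p1 p2 p3 (by omega)
    have b2 := infl_blk (n := n) hτ hβ (by omega) q1 q2 q3 (by omega)
    have g2 := infl_good (n := n) hτ hβ (by omega) q1 q2 q3 (by omega)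
    have hjk : j = k := by
      rcases lt_trichotomy j k with hlt | heq | hgt
      · exfalso
        rw [← he] at b2
        have := blk_outer (i := n - j) g1 (by omega) (by omega) (by omega) b1 b2 (by omega)
        rw [outer_infl hσ hα (by omega) p1 p2 p3] at this
        exact hσs _ _ (by omega) (by omega) this
      · exact heq
      · exfalso
        rw [he] at b1
        have := blk_outer (i := n - k) g2 (by omega) (by omega) (by omega) b2 b1 (by omega)
        rw [outer_infl hτ hβ (by omega) q1 q2 q3] at this
        exact hτs _ _ (by omega) (by omega) this
    subst hjk
    have hpq : p = q := by
      have r1 := g1.blk_out (by omega) b1 q (by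
        rw [he]; exact b2.2.2 q (le_refl _) (by omega))
      have r2 := g2.blk_out (by omega) b2 p (by
        rw [← he]; exact b1.2.2 p (le_refl _) (by omega))
      omega
    subst hpq
    have e1 : σ = τ := by
      rw [← outer_infl hσ hα (by omega) p1 p2 p3, he, outer_infl hτ hβ (by omega) q1 q2 q3]
    have e2 : α = β := by
      rw [← inner_infl (p := p) (σ := σ) hα, he, inner_infl hβ]
    subst e1 e2
    rfl
  · rintro ⟨g, hg⟩
    classical
    -- the largest proper block
    let Q : ℕ → Prop := fun j => 1 ≤ j ∧ j < n ∧ ∃ p, Blk n g j p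
    have hQ1 : Q 1 := by
      obtain ⟨p, h1, h2, h3⟩ := hg.exists_zero (by omega)
      refine ⟨le_refl _, by omega, p, h1, by omega, fun x k1 k2 => ?_⟩
      have : x = p := by omega
      rw [this]; omega
    have hspec : Q (Nat.findGreatest Q n) := Nat.findGreatest_spec (by omega) hQ1
    have hmax : ∀ k, Nat.findGreatest Q n < k → k ≤ n → ¬ Q k := fun k h1 h2 =>
      Nat.findGreatest_is_greatest h1 h2
    generalize Nat.findGreatest Q n = j at *
    obtain ⟨hj1, hj2, p, hb⟩ := hspec
    obtain ⟨j, rfl⟩ : ∃ k, j = k + 1 := ⟨j - 1, by omega⟩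
    have ho := outer_good (i := n - j) hg hj1 hj2 hb (by omega)
    have hi := inner_good hg hj1 hj2 hb
    have hs : SimpF (n - j) (outer (j+1) p g) := by
      intro j' p' h1 h2 hb'
      have := blk_infl hg hj1 hj2 h1 h2 hb (by omega) hb'
      exact hmax _ (by omega) (by omega) ⟨by omega, by omega, p', this⟩
    refine ⟨⟨⟨j, by omega⟩, ⟨_, ho, hs⟩, ⟨_, hi⟩⟩, ?_⟩
    simp only [decMap, Subtype.mk.injEq]
    have hz : zpos (outer (j+1) p g) = p := by
      obtain ⟨z1, z2, z3⟩ := ho.zpos_spec (by omega)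
      by_contra hc
      have := ho.pos_of_ne z1 z2 z3 p (fun h => hc h.symm)
      rw [outer_zero hj1 hb] at this
      omega
    rw [hz]
    exact infl_outer_inner hg hj1 hj2 hb

/-- Extension of a permutation to a function on the naturals. -/
def toF {n : ℕ} (π : Equiv.Perm (Fin n)) (x : ℕ) : ℕ :=
  if h : 1 ≤ x ∧ x ≤ n then (π ⟨x - 1, by omega⟩ : ℕ) else n

theorem toF_succ {n : ℕ} (π : Equiv.Perm (Fin n)) (x : Fin n) : toF π (x + 1) = π x := by
  have h : 1 ≤ (x : ℕ) + 1 ∧ (x : ℕ) + 1 ≤ n := by omega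
  simp [toF]

theorem toF_mk {n : ℕ} (π : Equiv.Perm (Fin n)) (x : ℕ) (hx : x < n) :
    toF π (x + 1) = π ⟨x, hx⟩ := toF_succ π ⟨x, hx⟩

theorem toF_lt_iff {n : ℕ} (π : Equiv.Perm (Fin n)) (x : ℕ) :
    toF π x < n ↔ 1 ≤ x ∧ x ≤ n := by
  by_cases h : 1 ≤ x ∧ x ≤ n
  · simp [toF, h]
  · simp [toF, h]

theorem toF_out {n : ℕ} (π : Equiv.Perm (Fin n)) (x : ℕ) (h : ¬ (1 ≤ x ∧ x ≤ n)) :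
    toF π x = n := by simp [toF, h]

theorem toF_le {n : ℕ} (π : Equiv.Perm (Fin n)) (x : ℕ) : toF π x ≤ n := by
  by_cases h : 1 ≤ x ∧ x ≤ n
  · exact ((toF_lt_iff π x).2 h).le
  · exact (toF_out π x h).le

theorem toF_good {n : ℕ} (π : Equiv.Perm (Fin n)) (h : MemA π) : GoodF n (toF π) := by
  obtain ⟨m1, m2, m3, m4, m5, m6⟩ := h
  refine ⟨toF_out _ _ (by omega), fun x hx => toF_out _ _ (by omega),
    fun x h1 h2 => (toF_lt_iff π x).2 ⟨h1, h2⟩, ?_, ?_, ?_⟩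
  · intro x y h1 h2 h3 h4 h5
    obtain ⟨x, rfl⟩ : ∃ k, x = k + 1 := ⟨x - 1, by omega⟩
    obtain ⟨y, rfl⟩ : ∃ k, y = k + 1 := ⟨y - 1, by omega⟩
    rw [toF_mk π x (by omega), toF_mk π y (by omega)] at h5
    have := π.injective (Fin.ext h5)
    simp only [Fin.mk.injEq] at this
    omega
  · rintro i j ⟨h1, h2, h3⟩
    have l1 := toF_le π (i+1)
    have b1 := (toF_lt_iff π i).1 (by omega)
    have b2 := (toF_lt_iff π j).1 (by omega)
    have b3 := (toF_lt_iff π (j+1)).1 (by omega)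
    have hij : i ≠ j := by rintro rfl; omega
    have hij2 : j ≠ i + 1 := by rintro rfl; omega
    have hij3 : i ≠ j + 1 := by rintro rfl; omega
    obtain ⟨i, rfl⟩ : ∃ k, i = k + 1 := ⟨i - 1, by omega⟩
    obtain ⟨j, rfl⟩ : ∃ k, j = k + 1 := ⟨j - 1, by omega⟩
    rw [toF_mk π i (by omega), toF_mk π j (by omega)] at h1
    rw [toF_mk π j (by omega), toF_mk π (j+1) (by omega)] at h2
    rw [toF_mk π (j+1) (by omega)] at h3
    by_cases hi : i + 1 < n
    · rw [toF_mk π (i+1) hi] at h3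
      rcases lt_or_gt_of_ne hij with hlt | hgt
      · exact m2 ⟨⟨i, by omega⟩, ⟨i+1, hi⟩, ⟨j, by omega⟩, ⟨j+1, by omega⟩, rfl, rfl,
          by simp only; omega, h1, h2, h3⟩
      · exact m4 ⟨⟨j, by omega⟩, ⟨j+1, by omega⟩, ⟨i, by omega⟩, ⟨i+1, hi⟩, rfl, rfl,
          by simp only; omega, h1, h2, h3⟩
    · exact m5 ⟨⟨j, by omega⟩, ⟨j+1, by omega⟩, ⟨i, by omega⟩, rfl, by simp only; omega,
        by simp only; omega, h1, h2⟩
  · rintro i j ⟨h1, h2, h3⟩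
    have l1 := toF_le π i
    have b1 := (toF_lt_iff π (i+1)).1 (by omega)
    have b2 := (toF_lt_iff π j).1 (by omega)
    have b3 := (toF_lt_iff π (j+1)).1 (by omega)
    have hij : i ≠ j := by rintro rfl; omega
    have hij2 : j ≠ i + 1 := by rintro rfl; omega
    have hij3 : i ≠ j + 1 := by rintro rfl; omega
    obtain ⟨j, rfl⟩ : ∃ k, j = k + 1 := ⟨j - 1, by omega⟩
    rw [toF_mk π i (by omega), toF_mk π (j+1) (by omega)] at h1
    rw [toF_mk π j (by omega), toF_mk π (j+1) (by omega)] at h2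
    rw [toF_mk π j (by omega)] at h3
    rcases Nat.eq_zero_or_pos i with rfl | hi
    · exact m6 ⟨⟨0, by omega⟩, ⟨j, by omega⟩, ⟨j+1, by omega⟩, rfl, rfl, by simp only; omega,
        h1, h2⟩
    obtain ⟨i, rfl⟩ : ∃ k, i = k + 1 := ⟨i - 1, by omega⟩
    rw [toF_mk π i (by omega)] at h3
    rcases lt_or_gt_of_ne hij with hlt | hgt
    · exact m3 ⟨⟨i, by omega⟩, ⟨i+1, by omega⟩, ⟨j, by omega⟩, ⟨j+1, by omega⟩, rfl, rfl,
        by simp only; omega, h1, h2, h3⟩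
    · exact m1 ⟨⟨j, by omega⟩, ⟨j+1, by omega⟩, ⟨i, by omega⟩, ⟨i+1, by omega⟩, rfl, rfl,
        by simp only; omega, h1, h2, h3⟩

theorem toF_step {n : ℕ} (π : Equiv.Perm (Fin n)) {i i' : Fin n} (e : (i' : ℕ) = i + 1) :
    toF π (i + 1 + 1) = π i' := by
  rw [← e]; exact toF_succ π i'

theorem memA_of_good {n : ℕ} (π : Equiv.Perm (Fin n)) (h : GoodF n (toF π)) : MemA π := by
  refine ⟨?_, ?_, ?_, ?_, ?_, ?_⟩
  · rintro ⟨i, i', j, j', e1, e2, hij, h1, h2, h3⟩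
    apply h.desc (j+1) (i+1)
    have ai := toF_step π e1
    have aj := toF_step π e2
    simp only [ai, aj, toF_succ]
    exact ⟨h1, h2, h3⟩
  · rintro ⟨i, i', j, j', e1, e2, hij, h1, h2, h3⟩
    apply h.asc (i+1) (j+1)
    have ai := toF_step π e1
    have aj := toF_step π e2
    simp only [ai, aj, toF_succ]
    exact ⟨h1, h2, h3⟩
  · rintro ⟨i, i', j, j', e1, e2, hij, h1, h2, h3⟩
    apply h.desc (i+1) (j+1)
    have ai := toF_step π e1
    have aj := toF_step π e2
    simp only [ai, aj, toF_succ]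
    exact ⟨h1, h2, h3⟩
  · rintro ⟨i, i', j, j', e1, e2, hij, h1, h2, h3⟩
    apply h.asc (j+1) (i+1)
    have ai := toF_step π e1
    have aj := toF_step π e2
    simp only [ai, aj, toF_succ]
    exact ⟨h1, h2, h3⟩
  · rintro ⟨i, i', l, e1, e2, hij, h1, h2⟩
    apply h.asc (l+1) (i+1)
    have ai := toF_step π e1
    rw [h.big (l+1+1) (by omega)]
    simp only [ai, toF_succ]
    exact ⟨h1, h2, (π i').2⟩
  · rintro ⟨f, j, j', e1, e2, hij, h1, h2⟩
    apply h.desc 0 (j+1)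
    have e : 0 + 1 = (f : ℕ) + 1 := by omega
    have aj := toF_step π e2
    rw [h.zero, e]
    simp only [aj, toF_succ]
    exact ⟨h1, h2, (π j).2⟩

theorem toF_inj {n : ℕ} {π ρ : Equiv.Perm (Fin n)} (h : toF π = toF ρ) : π = ρ := by
  ext x
  have := congrFun h (x + 1)
  rwa [toF_succ, toF_succ] at this

theorem toF_surj {n : ℕ} {g : ℕ → ℕ} (h : GoodF n g) : ∃ π : Equiv.Perm (Fin n), toF π = g := by
  let f : Fin n → Fin n := fun x => ⟨g (x + 1), h.lt _ (by omega) (by omega)⟩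
  have hf : Function.Injective f := by
    intro x y hxy
    simp only [f, Fin.mk.injEq] at hxy
    have := h.inj _ _ (by omega) (by omega) (by omega) (by omega) hxy
    exact Fin.ext (by omega)
  refine ⟨Equiv.ofBijective f (Finite.injective_iff_bijective.1 hf), ?_⟩
  funext x
  by_cases hx : 1 ≤ x ∧ x ≤ n
  · obtain ⟨x, rfl⟩ : ∃ k, x = k + 1 := ⟨x - 1, by omega⟩
    rw [toF_mk _ x (by omega)]
    simp [f]
  · rw [toF_out _ _ hx]
    rcases Nat.eq_zero_or_pos x with rfl | h0
    · exact h.zero.symm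
    · exact (h.big x (by omega)).symm

theorem simple_iff {n : ℕ} (π : Equiv.Perm (Fin n)) (h : MemA π) :
    IsSimplePerm π ↔ SimpF n (toF π) := by
  constructor
  · intro hs j p hj hjn ⟨h1, h2, h3⟩
    have := hs ⟨p - 1, by omega⟩ ⟨p + j - 2, by omega⟩ (by simp only [Fin.mk_le_mk]; omega)
      ⟨0, fun x hx1 hx2 => by
        simp only [Fin.le_def] at hx1 hx2
        have := h3 (x + 1) (by omega) (by omega)
        rw [toF_succ] at this
        simp only
        omega⟩
    simp only [Fin.mk.injEq] at this
    omega
  · intro hs i j hij ⟨v, hv⟩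
    by_contra hc
    push Not at hc
    obtain ⟨hc1, hc2⟩ := hc
    have hne : (i : ℕ) ≠ j := fun he => hc1 (Fin.ext he)
    have hij' : (i : ℕ) ≤ j := hij
    have hin := i.2
    have hjn := j.2
    obtain ⟨k, p, k1, k2, k3⟩ := (toF_good π h).blk_of_block (i + 1) (j - i + 1) v (by omega)
      (by omega) (by omega) (by omega) (by
        intro x h1 h2
        obtain ⟨x, rfl⟩ : ∃ k, x = k + 1 := ⟨x - 1, by omega⟩
        rw [toF_mk π x (by omega)]
        have := hv ⟨x, by omega⟩ (by rw [Fin.le_def]; simp only; omega)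
          (by rw [Fin.le_def]; simp only; omega)
        omega)
    exact hs k p k1 k2 k3

theorem aCard_eq (n : ℕ) : aCard n = Nat.card (AF n) := by
  apply Nat.card_congr
  refine Equiv.ofBijective (fun π => ⟨toF π.1, toF_good π.1 π.2⟩) ⟨?_, ?_⟩
  · rintro ⟨π, hπ⟩ ⟨ρ, hρ⟩ he
    simp only [Subtype.mk.injEq] at he ⊢
    exact toF_inj he
  · rintro ⟨g, hg⟩
    obtain ⟨π, rfl⟩ := toF_surj hg
    exact ⟨⟨π, memA_of_good π hg⟩, rfl⟩

theorem sCard_eq (n : ℕ) : sCard n = Nat.card (SF n) := by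
  apply Nat.card_congr
  refine Equiv.ofBijective
    (fun π => ⟨toF π.1, toF_good π.1 π.2.1, (simple_iff π.1 π.2.1).1 π.2.2⟩) ⟨?_, ?_⟩
  · rintro ⟨π, hπ⟩ ⟨ρ, hρ⟩ he
    simp only [Subtype.mk.injEq] at he ⊢
    exact toF_inj he
  · rintro ⟨g, hg, hs⟩
    obtain ⟨π, rfl⟩ := toF_surj hg
    have hm := memA_of_good π hg
    exact ⟨⟨π, hm, (simple_iff π hm).2 hs⟩, rfl⟩

instance AF_finite (n : ℕ) : Finite (AF n) := by
  refine Finite.of_surjective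
    (fun π : {π : Equiv.Perm (Fin n) // MemA π} => (⟨toF π.1, toF_good π.1 π.2⟩ : AF n)) ?_
  rintro ⟨g, hg⟩
  obtain ⟨π, rfl⟩ := toF_surj hg
  exact ⟨⟨π, memA_of_good π hg⟩, rfl⟩

instance SF_finite (n : ℕ) : Finite (SF n) :=
  Finite.of_injective (fun g : SF n => (⟨g.1, g.2.1⟩ : AF n)) (by
    rintro ⟨g, hg⟩ ⟨g', hg'⟩ he
    simpa using he)

theorem aCard_rec (m : ℕ) (hm : 1 ≤ m) :
    aCard (m + 1) = ∑ j : Fin m, sCard (m - j + 1) * aCard (j + 1) := by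
  rw [aCard_eq, ← Nat.card_congr (Equiv.ofBijective _ (decMap_bij (m+1) (by omega))),
    Nat.card_sigma]
  apply Finset.sum_congr rfl
  intro j _
  have hj : (j : ℕ) < m := j.2
  rw [Nat.card_prod, ← aCard_eq, ← sCard_eq]
  congr 2
  omega

theorem aCard_one : aCard 1 = 1 := by
  unfold aCard
  have : Unique {π : Equiv.Perm (Fin 1) // MemA π} :=
    { default := ⟨1, by
        refine ⟨?_, ?_, ?_, ?_, ?_, ?_⟩
        · rintro ⟨i, i', j, j', e1, _⟩; omega
        · rintro ⟨i, i', j, j', e1, _⟩; omega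
        · rintro ⟨i, i', j, j', e1, _⟩; omega
        · rintro ⟨i, i', j, j', e1, _⟩; omega
        · rintro ⟨i, i', j, e1, _⟩; omega
        · rintro ⟨i, i', j, _, e1, _⟩; omega⟩
      uniq := fun a => Subtype.ext (Subsingleton.elim _ _) }
  exact Nat.card_unique

/-- Prepending a block. -/
def consComp {m : ℕ} (t : Σ j : Fin m, Composition j) : Composition m where
  blocks := (m - t.1) :: t.2.blocks
  blocks_pos := by
    intro i hi
    have := t.1.2
    rcases List.mem_cons.1 hi with rfl | hi
    · omega
    · exact t.2.blocks_pos hi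
  blocks_sum := by
    have := t.1.2
    rw [List.sum_cons, t.2.blocks_sum]; omega

theorem consComp_bij {m : ℕ} (hm : 1 ≤ m) : Function.Bijective (consComp (m := m)) := by
  constructor
  · rintro ⟨⟨j, hj⟩, c⟩ ⟨⟨k, hk⟩, d⟩ he
    have h := congrArg Composition.blocks he
    simp only [consComp, List.cons.injEq] at h
    obtain ⟨h1, h2⟩ := h
    have : j = k := by omega
    subst this
    have : c = d := Composition.ext h2
    rw [this]
  · rintro ⟨bl, hpos, hsum⟩
    cases bl with
    | nil => simp at hsum; omega
    | cons a t =>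
      have ha : 0 < a := hpos (by simp)
      rw [List.sum_cons] at hsum
      refine ⟨⟨⟨t.sum, by omega⟩, ⟨t, fun hi => hpos (by simp [hi]), rfl⟩⟩, ?_⟩
      apply Composition.ext
      simp only [consComp, List.cons.injEq, and_true]
      omega

theorem aCard_comp (m : ℕ) :
    aCard (m + 1) = ∑ c : Composition m, (c.blocks.map fun x => sCard (x + 1)).prod := by
  induction m using Nat.strong_induction_on with
  | _ m ih =>
    rcases Nat.eq_zero_or_pos m with rfl | hm
    · rw [aCard_one]
      rw [Fintype.sum_eq_single (Composition.ones 0) (fun c hc => absurd (by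
        apply Composition.ext
        have hs := c.blocks_sum
        rcases hb : c.blocks with _ | ⟨a, t⟩
        · simp [Composition.ones]
        · have := c.blocks_pos (i := a) (by simp [hb])
          rw [hb, List.sum_cons] at hs
          omega) hc)]
      simp [Composition.ones]
    · rw [aCard_rec m hm, ← (Equiv.ofBijective _ (consComp_bij hm)).sum_comp,
        Fintype.sum_sigma]
      apply Finset.sum_congr rfl
      intro j _
      rw [ih j j.2, Finset.mul_sum]
      apply Finset.sum_congr rfl
      intro c _
      simp [consComp]

/-- For `n ≥ 2`, `a_n = ∑` over compositions `(x_1, …, x_k)` of `n − 1` of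
`s_{x_1+1} ⋯ s_{x_k+1}`. -/
theorem aCard_composition_sum (n : ℕ) (hn : 2 ≤ n) :
    aCard n = ∑ c : Composition (n - 1), (c.blocks.map fun x => sCard (x + 1)).prod := by
  obtain ⟨m, rfl⟩ : ∃ m, n = m + 1 := ⟨n - 1, by omega⟩
  exact aCard_comp m
end
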